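/- Write ζ(t) = ∫₀ᵗ μ̂ₛ(f) ds and, for a probability measure ν on 𝕊, write ν(ζₙ(·,t)) = ∫ ζₙ(y,t) dν(y). Then: (i) if ν has a Lipschitz continuous density, then sup_{t∈[0,1]} |n^{1/2} ν(ζₙ(·,t)) − n^{1/2} 𝔪(ζₙ(·,t))| → 0 as n → ∞ (indeed it is O(n^{−1/2})); (ii) if η > 1/2, then sup_{t∈[0,1]} |n^{1/2} ζ(t) − n^{1/2} 𝔪(ζₙ(·,t))| → 0 as n → ∞; (iii) if ν is an arbitrary absolutely continuous probability measure, then sup_{t∈[0,1]} |ν(ζₙ(·,t)) − ζ(t)| → 0 as n → ∞. -/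

import Mathlib

open MeasureTheory Filter Topology Set UniformConvergence

noncomputable section

instance : Fact ((0:ℝ) < 1) := ⟨zero_lt_one⟩

/-- The circle `𝕊 = ℝ/ℤ`. -/
abbrev Circle1 : Type := AddCircle (1 : ℝ)

/-- A `C²` expanding circle map with expansion `≥ lam` and `‖T''‖_∞ ≤ Astar`,
encoded by a lift `F : ℝ → ℝ` satisfying `F (x+1) = F x + deg`. -/
structure CM (lam Astar : ℝ) where
  F : ℝ → ℝ
  deg : ℤ
  lift_add_one : ∀ x : ℝ, F (x + 1) = F x + deg
  contDiff : ContDiff ℝ 2 F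
  expanding : ∀ x : ℝ, lam ≤ deriv F x
  second_bound : ∀ x : ℝ, |deriv (deriv F) x| ≤ Astar

namespace CM

variable {lam Astar : ℝ}

/-- The induced map on the circle. -/
def toMap (T : CM lam Astar) : Circle1 → Circle1 :=
  fun x => (↑(T.F ((AddCircle.equivIco 1 0 x : ℝ))) : Circle1)

/-- The derivative of `T`, as a function on the circle. -/
def dmap (T : CM lam Astar) : Circle1 → ℝ :=
  fun x => deriv T.F ((AddCircle.equivIco 1 0 x : ℝ))

end CM

/-- The `C¹` distance on the space of maps. -/
def dC1 {lam Astar : ℝ} (T₁ T₂ : CM lam Astar) : ℝ :=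
  (⨆ x : Circle1, dist (T₁.toMap x) (T₂.toMap x)) + (⨆ x : Circle1, |T₁.dmap x - T₂.dmap x|)

/-- The transfer operator `ℒ_T h (x) = ∑_{T y = x} h y / T' y`. -/
def transfer {lam Astar : ℝ} (T : CM lam Astar) (h : Circle1 → ℝ) : Circle1 → ℝ :=
  fun x => ∑' y : {y : Circle1 // T.toMap y = x}, h y / T.dmap y

/-- Iterated transfer operators `ℒ_k ⋯ ℒ_1` of the sequence `T_1, T_2, …` (`Ts i = T_i`). -/
def transferIter {lam Astar : ℝ} (Ts : ℕ → CM lam Astar) : ℕ → (Circle1 → ℝ) → (Circle1 → ℝ)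
  | 0, h => h
  | (k+1), h => transfer (Ts (k+1)) (transferIter Ts k h)

/-- Composition `T_k ∘ ⋯ ∘ T_1` as circle maps. -/
def mapIter {lam Astar : ℝ} (Ts : ℕ → CM lam Astar) : ℕ → Circle1 → Circle1
  | 0 => id
  | (k+1) => (Ts (k+1)).toMap ∘ mapIter Ts k

/-- Composition of the lifts `F_k ∘ ⋯ ∘ F_1`. -/
def liftIter {lam Astar : ℝ} (Ts : ℕ → CM lam Astar) : ℕ → ℝ → ℝ
  | 0 => id
  | (k+1) => (Ts (k+1)).F ∘ liftIter Ts k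

/-- A real representative of `z`. -/
def zrep (z : Circle1) : ℝ := (AddCircle.equivIco 1 0 z : ℝ)

/-- The coordinate on the cut circle `J_z = 𝕊 ∖ {z}`. -/
def arcCoord (z x : Circle1) : ℝ := ((AddCircle.equivIoc 1 (zrep z) x : ℝ))

/-- `|x − y|_z`: the length of the subarc of `J_z` connecting `x` and `y`. -/
def arcDist (z x y : Circle1) : ℝ := |arcCoord z x - arcCoord z y|

/-- `g` is Lipschitz on `J_z = 𝕊 ∖ {z}` with constant `L`. -/
def LipOnArc (z : Circle1) (L : ℝ) (g : Circle1 → ℝ) : Prop :=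
  ∀ x y : Circle1, x ≠ z → y ≠ z → |g x - g y| ≤ L * arcDist z x y

/-- A probability density w.r.t. the Haar–Lebesgue measure `𝔪` on the circle. -/
def IsProbDensity (ψ : Circle1 → ℝ) : Prop :=
  Integrable ψ volume ∧ (∫ x : Circle1, ψ x) = 1 ∧ ∀ x, 0 ≤ ψ x

/-- The class `𝒟_L`: positive probability densities whose logarithm is Lipschitz
with constant `L` on `J_z` for some `z`. -/
def memD (L : ℝ) (ψ : Circle1 → ℝ) : Prop :=
  IsProbDensity ψ ∧ (∀ x, 0 < ψ x) ∧ ∃ z : Circle1, LipOnArc z L (fun x => Real.log (ψ x))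

/-- The `L¹(𝔪)` norm. -/
def l1norm (h : Circle1 → ℝ) : ℝ := ∫ x : Circle1, |h x|

/-- The supremum norm. -/
def supNorm (h : Circle1 → ℝ) : ℝ := ⨆ x : Circle1, |h x|

/-- The Lipschitz constant of `h` (w.r.t. the metric of the circle). -/
def lipConst (h : Circle1 → ℝ) : ℝ :=
  sInf {L : ℝ | 0 ≤ L ∧ ∀ x y : Circle1, |h x - h y| ≤ L * dist x y}

/-- The Lipschitz norm `‖h‖_Lip = Lip(h) + ‖h‖_∞`. -/
def lipNorm (h : Circle1 → ℝ) : ℝ := lipConst h + supNorm h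

/-- `ρ` is the density of the SRB measure of `T`: the density of a `T`-invariant
probability measure equivalent to `𝔪`. -/
def IsSRBDensity {lam Astar : ℝ} (T : CM lam Astar) (ρ : Circle1 → ℝ) : Prop :=
  IsProbDensity ρ ∧ (∀ᵐ x : Circle1, 0 < ρ x) ∧
    Measure.map T.toMap (volume.withDensity (fun x => ENNReal.ofReal (ρ x))) =
      volume.withDensity (fun x => ENNReal.ofReal (ρ x))

section QDS

variable {lam Astar : ℝ}

/-- `x_{n,k} = T_{n,k} ∘ ⋯ ∘ T_{n,1}` for a triangular array. -/
def arrIter (Tarr : ℕ → ℕ → CM lam Astar) (n : ℕ) : ℕ → Circle1 → Circle1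
  | 0 => id
  | (k+1) => (Tarr n (k+1)).toMap ∘ arrIter Tarr n k

/-- `ℒ_{n,k} ⋯ ℒ_{n,1}` for a triangular array. -/
def arrTransfer (Tarr : ℕ → ℕ → CM lam Astar) (n : ℕ) : ℕ → (Circle1 → ℝ) → (Circle1 → ℝ)
  | 0, h => h
  | (k+1), h => transfer (Tarr n (k+1)) (arrTransfer Tarr n k h)

/-- `f_{n,k} = f ∘ T_{n,k} ∘ ⋯ ∘ T_{n,1}` evaluated at `x`. -/
def fnk (Tarr : ℕ → ℕ → CM lam Astar) (f : Circle1 → ℝ) (n k : ℕ) (x : Circle1) : ℝ :=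
  f (arrIter Tarr n k x)

/-- `ζₙ(x,t) = n⁻¹ (∑_{k<⌊nt⌋} f_{n,k}(x) + {nt}·f_{n,⌊nt⌋}(x))`. -/
def zetaP (Tarr : ℕ → ℕ → CM lam Astar) (f : Circle1 → ℝ) (n : ℕ) (x : Circle1) (t : ℝ) : ℝ :=
  (n : ℝ)⁻¹ * ((∑ k ∈ Finset.range ⌊(n : ℝ) * t⌋₊, fnk Tarr f n k x) +
    Int.fract ((n : ℝ) * t) * fnk Tarr f n ⌊(n : ℝ) * t⌋₊ x)

/-- `ξₙ(x,t) = √n ζₙ(x,t) − √n μ(ζₙ(·,t))` for a measure `μ`. -/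
def xiP (Tarr : ℕ → ℕ → CM lam Astar) (f : Circle1 → ℝ) (μ : Measure Circle1) (n : ℕ)
    (x : Circle1) (t : ℝ) : ℝ :=
  Real.sqrt n * zetaP Tarr f n x t - Real.sqrt n * ∫ y, zetaP Tarr f n y t ∂μ

/-- The Hölder continuity (exponent `η`) of the curve `γ` on `[0,1]`, w.r.t. `d_{C¹}`. -/
def HolderCurve (η : ℝ) (γ : ℝ → CM lam Astar) : Prop :=
  ∃ H : ℝ, ∀ s ∈ Icc (0:ℝ) 1, ∀ t ∈ Icc (0:ℝ) 1, dC1 (γ s) (γ t) ≤ H * |s - t| ^ η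

/-- The convergence-rate condition `sup_n n^η sup_t d_{C¹}(T_{n,⌊nt⌋}, γ_t) < ∞`. -/
def ArrayApprox (η : ℝ) (γ : ℝ → CM lam Astar) (Tarr : ℕ → ℕ → CM lam Astar) : Prop :=
  ∃ M : ℝ, ∀ n : ℕ, 1 ≤ n → ∀ t ∈ Icc (0:ℝ) 1,
    (n : ℝ) ^ η * dC1 (Tarr n ⌊(n : ℝ) * t⌋₊) (γ t) ≤ M

end QDS

/-- The path space: functions `[0,1] → ℝ` with the topology of uniform convergence;
continuous paths (with the supremum metric) embed isometrically. -/
abbrev PathSpace : Type := (Icc (0:ℝ) 1) →ᵤ ℝ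

instance : MeasurableSpace PathSpace := borel PathSpace

/-- A function `[0,1] → ℝ` (given as a function on `ℝ`) as a point of the path space. -/
def pathOf (g : ℝ → ℝ) : PathSpace := UniformFun.ofFun (fun t => g t)

/-- Evaluation of a path at time `t` (clamped to `[0,1]`). -/
def evalPath (t : ℝ) (ω : PathSpace) : ℝ := UniformFun.toFun ω (projIcc 0 1 zero_le_one t)


section Extra

variable {lam Astar : ℝ}

/-- `μ(ζₙ(·,t))` for the measure with density `ρ` w.r.t. `𝔪`. -/
def zetaMean (Tarr : ℕ → ℕ → CM lam Astar) (f : Circle1 → ℝ) (ρ : Circle1 → ℝ)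
    (n : ℕ) (t : ℝ) : ℝ :=
  ∫ y : Circle1, zetaP Tarr f n y t * ρ y

/-- `𝔪(ζₙ(·,t))`, the mean w.r.t. the Lebesgue measure. -/
def zetaMeanM (Tarr : ℕ → ℕ → CM lam Astar) (f : Circle1 → ℝ) (n : ℕ) (t : ℝ) : ℝ :=
  ∫ y : Circle1, zetaP Tarr f n y t

/-- `ξₙ(x,t) = √n ζₙ(x,t) − √n μ(ζₙ(·,t))`, where `μ` has density `ρ`. -/
def xiD (Tarr : ℕ → ℕ → CM lam Astar) (f : Circle1 → ℝ) (ρ : Circle1 → ℝ)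
    (n : ℕ) (x : Circle1) (t : ℝ) : ℝ :=
  Real.sqrt n * zetaP Tarr f n x t - Real.sqrt n * zetaMean Tarr f ρ n t

end Extra

/-- The σ-algebra `𝔉_t` on the path space, generated by the evaluations at times `s ∈ [0,t]`. -/
def pathFiltration (t : ℝ) : MeasurableSpace PathSpace :=
  ⨆ (s : ℝ) (_ : 0 ≤ s ∧ s ≤ t), MeasurableSpace.comap (evalPath s) (borel ℝ)

/-- The process `M_t(ω) = A(ω(t)) − A(ω(0)) − ½∫₀ᵗ σ̂ₛ²·A''(ω(s)) ds`. -/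
def MGproc (σ2 : ℝ → ℝ) (A : ℝ → ℝ) (t : ℝ) (ω : PathSpace) : ℝ :=
  A (evalPath t ω) - A (evalPath 0 ω) -
    (1/2) * ∫ s in (0:ℝ)..t, σ2 s * deriv (deriv A) (evalPath s ω)

/-- `P` solves the martingale problem on `C⁰([0,1],ℝ)` for the generator `½σ̂ₜ² d²/dx²`,
started at `0`:  `P` is a probability measure, concentrated on continuous paths starting at `0`,
and for every `A ∈ C_c^∞(ℝ)` the process `MGproc σ2 A` is a `P`-martingale w.r.t. the
natural filtration `𝔉_t`.  -/
def SolvesMartingaleProblem (σ2 : ℝ → ℝ) (P : Measure PathSpace) : Prop :=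
  IsProbabilityMeasure P ∧
  P {ω : PathSpace | evalPath 0 ω = 0} = 1 ∧
  P {ω : PathSpace | Continuous (UniformFun.toFun ω)} = 1 ∧
  ∀ A : ℝ → ℝ, ContDiff ℝ (⊤ : ℕ∞) A → HasCompactSupport A →
    (∀ t ∈ Icc (0:ℝ) 1, Integrable (MGproc σ2 A t) P) ∧
    (∀ t ∈ Icc (0:ℝ) 1, @Measurable PathSpace ℝ (pathFiltration t) _ (MGproc σ2 A t)) ∧
    (∀ s ∈ Icc (0:ℝ) 1, ∀ t ∈ Icc (0:ℝ) 1, s ≤ t →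
      P[MGproc σ2 A t | pathFiltration s] =ᵐ[P] MGproc σ2 A s)

end

open MeasureTheory Filter Topology Set UniformConvergence

namespace Aux17

variable {lam Astar : ℝ}

theorem F_diff (T : CM lam Astar) : Differentiable ℝ T.F :=
  T.contDiff.differentiable (by norm_num)

theorem F_cont (T : CM lam Astar) : Continuous T.F := (F_diff T).continuous

theorem F'_diff (T : CM lam Astar) : Differentiable ℝ (deriv T.F) := by
  have h2 : ContDiff ℝ 1 (deriv T.F) := by
    have := (contDiff_succ_iff_deriv (n := 1) (f := T.F)).1 (by rw [one_add_one_eq_two]; exact T.contDiff)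
    exact this.2.2
  exact h2.differentiable (by norm_num)

theorem F'_cont (T : CM lam Astar) : Continuous (deriv T.F) := (F'_diff T).continuous

theorem F'_pos (hlam : 1 < lam) (T : CM lam Astar) (x : ℝ) : 0 < deriv T.F x := by
  linarith [T.expanding x]

theorem F'_lip (T : CM lam Astar) (x y : ℝ) : |deriv T.F x - deriv T.F y| ≤ Astar * |x - y| := by
  have := Convex.norm_image_sub_le_of_norm_deriv_le (f := deriv T.F) (C := Astar) (s := univ)
    (fun x _ => (F'_diff T) x) (fun x _ => T.second_bound x) convex_univ (mem_univ y) (mem_univ x)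
  simpa [Real.norm_eq_abs] using this

theorem F'_per (T : CM lam Astar) (x : ℝ) : deriv T.F (x + 1) = deriv T.F x := by
  have h : (fun y => T.F (y + 1)) = fun y => T.F y + T.deg := funext T.lift_add_one
  have h1 := congrArg (fun g => deriv g x) h
  simpa [deriv_comp_add_const] using h1

theorem F_add_nat (T : CM lam Astar) (x : ℝ) (n : ℕ) : T.F (x + n) = T.F x + n * T.deg := by
  induction n with
  | zero => simp
  | succ n ih => push_cast; rw [← add_assoc, T.lift_add_one, ih]; ring

theorem F_add_int (T : CM lam Astar) (x : ℝ) (m : ℤ) : T.F (x + m) = T.F x + m * T.deg := by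
  obtain ⟨n, rfl | rfl⟩ := m.eq_nat_or_neg
  · exact_mod_cast F_add_nat T x n
  · have := F_add_nat T (x + ((-(n:ℤ) : ℤ) : ℝ)) n
    push_cast at this ⊢
    rw [neg_add_cancel_right] at this
    linarith

theorem F_expand (T : CM lam Astar) {x y : ℝ} (h : x ≤ y) : lam * (y - x) ≤ T.F y - T.F x :=
  mul_sub_le_image_sub_of_le_deriv (F_diff T) T.expanding h

theorem F_expand' (_hlam : 1 < lam) (T : CM lam Astar) (x y : ℝ) :
    lam * |x - y| ≤ |T.F x - T.F y| := by
  rcases le_total x y with h | h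
  · rw [abs_sub_comm, abs_sub_comm (T.F x), abs_of_nonneg (sub_nonneg.2 h)]
    exact (F_expand T h).trans (le_abs_self _)
  · rw [abs_of_nonneg (sub_nonneg.2 h)]
    exact (F_expand T h).trans (le_abs_self _)

theorem F_inj (hlam : 1 < lam) (T : CM lam Astar) : Function.Injective T.F := by
  intro x y h
  have := F_expand' hlam T x y
  rw [h, sub_self, abs_zero] at this
  have h0 : |x - y| ≤ 0 := by nlinarith [abs_nonneg (x - y)]
  exact sub_eq_zero.1 (abs_nonpos_iff.1 h0)

theorem deg_pos (hlam : 1 < lam) (T : CM lam Astar) : 0 < T.deg := by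
  have h := F_expand T (zero_le_one (α := ℝ))
  have h2 := T.lift_add_one 0
  rw [zero_add] at h2
  have : (0:ℝ) < T.deg := by linarith
  exact_mod_cast this

theorem F_surj (hlam : 1 < lam) (T : CM lam Astar) : Function.Surjective T.F := by
  refine (F_cont T).surjective ?_ ?_
  · have h : Tendsto (fun x : ℝ => T.F 0 + lam * x) atTop atTop :=
      tendsto_atTop_add_const_left _ _ (tendsto_id.const_mul_atTop (by linarith))
    refine tendsto_atTop_mono' _ ?_ h
    filter_upwards [eventually_ge_atTop (0:ℝ)] with x hx
    have := F_expand T hx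
    linarith
  · have h : Tendsto (fun x : ℝ => T.F 0 + lam * x) atBot atBot :=
      tendsto_atBot_add_const_left _ _ (tendsto_id.const_mul_atBot (by linarith))
    refine tendsto_atBot_mono' _ ?_ h
    filter_upwards [eventually_le_atBot (0:ℝ)] with x hx
    have := F_expand T hx
    linarith

/-- inverse of the lift -/
noncomputable def S (T : CM lam Astar) : ℝ → ℝ := Function.invFun T.F

theorem F_S (hlam : 1 < lam) (T : CM lam Astar) (x : ℝ) : T.F (S T x) = x :=
  Function.rightInverse_invFun (F_surj hlam T) x

theorem S_F (hlam : 1 < lam) (T : CM lam Astar) (x : ℝ) : S T (T.F x) = x :=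
  Function.leftInverse_invFun (F_inj hlam T) x

theorem S_lip (hlam : 1 < lam) (T : CM lam Astar) (x y : ℝ) : lam * |S T x - S T y| ≤ |x - y| := by
  have := F_expand' hlam T (S T x) (S T y)
  rwa [F_S hlam, F_S hlam] at this

theorem S_cont (hlam : 1 < lam) (T : CM lam Astar) : Continuous (S T) := by
  have : LipschitzWith 1 (S T) := by
    refine LipschitzWith.of_dist_le_mul fun x y => ?_
    rw [Real.dist_eq, Real.dist_eq]
    have := S_lip hlam T x y
    push_cast
    nlinarith [abs_nonneg (S T x - S T y)]
  exact this.continuous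

theorem S_deriv (hlam : 1 < lam) (T : CM lam Astar) (x : ℝ) :
    HasDerivAt (S T) (deriv T.F (S T x))⁻¹ x :=
  HasDerivAt.of_local_left_inverse (S_cont hlam T).continuousAt (F_diff T _).hasDerivAt
    (F'_pos hlam T _).ne' (Eventually.of_forall (F_S hlam T))

theorem S_add_deg (hlam : 1 < lam) (T : CM lam Astar) (x : ℝ) : S T (x + T.deg) = S T x + 1 := by
  apply F_inj hlam T
  rw [F_S hlam, T.lift_add_one, F_S hlam]

theorem coe_add_int (x : ℝ) (m : ℤ) : ((x + m : ℝ) : Circle1) = (x : Circle1) := by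
  have : ((m : ℝ) : Circle1) = 0 := (AddCircle.coe_eq_zero_iff 1).2 ⟨m, by simp⟩
  rw [AddCircle.coe_add, this, add_zero]

theorem rep_coe (x : ℝ) : ((AddCircle.equivIco 1 0 (x : Circle1) : Ico (0:ℝ) (0+1)) : ℝ) = Int.fract x := by
  rw [AddCircle.coe_equivIco_mk_apply]; simp

theorem toMap_coe (T : CM lam Astar) (x : ℝ) : T.toMap (x : Circle1) = (T.F x : Circle1) := by
  unfold CM.toMap
  rw [rep_coe]
  conv_rhs => rw [← Int.fract_add_floor x, F_add_int]
  rw [← Int.cast_mul, coe_add_int]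

theorem dmap_coe (T : CM lam Astar) (x : ℝ) : T.dmap (x : Circle1) = deriv T.F x := by
  unfold CM.dmap
  rw [rep_coe]
  have hp : Function.Periodic (deriv T.F) 1 := F'_per T
  have := hp.int_mul ⌊x⌋ (Int.fract x)
  conv_rhs => rw [← Int.fract_add_floor x]
  simpa using this.symm

theorem toMap_cont (T : CM lam Astar) : Continuous T.toMap := by
  have hq : IsQuotientMap (fun x : ℝ => (x : Circle1)) :=
    QuotientAddGroup.isQuotientMap_mk _
  rw [hq.continuous_iff]
  have : T.toMap ∘ (fun x : ℝ => (x : Circle1)) = fun x => (T.F x : Circle1) :=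
    funext (toMap_coe T)
  rw [this]
  exact (AddCircle.continuous_mk' 1).comp (F_cont T)

/-- closeness of lifts -/
def Close (δ : ℝ) (T₁ T₂ : CM lam Astar) : Prop :=
  ∀ x : ℝ, dist (T₁.F x : Circle1) (T₂.F x : Circle1) ≤ δ ∧ |deriv T₁.F x - deriv T₂.F x| ≤ δ

theorem Close.symm {δ : ℝ} {T₁ T₂ : CM lam Astar} (h : Close δ T₁ T₂) : Close δ T₂ T₁ :=
  fun x => ⟨by rw [dist_comm]; exact (h x).1, by rw [abs_sub_comm]; exact (h x).2⟩

theorem Close.trans {δ ε : ℝ} {T₁ T₂ T₃ : CM lam Astar} (h : Close δ T₁ T₂) (h' : Close ε T₂ T₃) :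
    Close (δ + ε) T₁ T₃ :=
  fun x => ⟨(dist_triangle _ _ _).trans (add_le_add (h x).1 (h' x).1),
    (abs_sub_le _ _ _).trans (add_le_add (h x).2 (h' x).2)⟩

theorem Close.mono {δ ε : ℝ} {T₁ T₂ : CM lam Astar} (h : Close δ T₁ T₂) (h' : δ ≤ ε) :
    Close ε T₁ T₂ :=
  fun x => ⟨(h x).1.trans h', (h x).2.trans h'⟩

theorem Close.nonneg {δ : ℝ} {T₁ T₂ : CM lam Astar} (h : Close δ T₁ T₂) : 0 ≤ δ :=
  dist_nonneg.trans (h 0).1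

theorem close_dC1 (hA : 0 < Astar) (T₁ T₂ : CM lam Astar) : Close (dC1 T₁ T₂) T₁ T₂ := by
  have b1 : BddAbove (range fun x : Circle1 => dist (T₁.toMap x) (T₂.toMap x)) :=
    (isCompact_range ((toMap_cont T₁).dist (toMap_cont T₂))).bddAbove
  have b2 : BddAbove (range fun x : Circle1 => |T₁.dmap x - T₂.dmap x|) := by
    refine ⟨|deriv T₁.F 0 - deriv T₂.F 0| + 2 * Astar, ?_⟩
    rintro _ ⟨x, rfl⟩
    have hx := (AddCircle.equivIco 1 0 x).2
    simp only [CM.dmap]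
    set y : ℝ := (AddCircle.equivIco 1 0 x : ℝ)
    have h1 := F'_lip T₁ y 0
    have h2 := F'_lip T₂ y 0
    have hy : |y - 0| ≤ 1 := by
      rw [sub_zero, abs_of_nonneg hx.1]; linarith [hx.2]
    have h3 : |deriv T₁.F y - deriv T₂.F y| ≤ |deriv T₁.F y - deriv T₁.F 0|
        + |deriv T₁.F 0 - deriv T₂.F 0| + |deriv T₂.F y - deriv T₂.F 0| := by
      rw [abs_sub_comm (deriv T₂.F y)]
      exact (abs_sub_le _ (deriv T₂.F 0) _).trans (add_le_add (abs_sub_le _ _ _) le_rfl)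
    nlinarith
  have n1 : 0 ≤ ⨆ x : Circle1, dist (T₁.toMap x) (T₂.toMap x) := Real.iSup_nonneg fun _ => dist_nonneg
  have n2 : 0 ≤ ⨆ x : Circle1, |T₁.dmap x - T₂.dmap x| := Real.iSup_nonneg fun _ => abs_nonneg _
  intro x
  have l1 := le_ciSup b1 (x : Circle1)
  have l2 := le_ciSup b2 (x : Circle1)
  simp only [toMap_coe, dmap_coe] at l1 l2
  unfold dC1
  exact ⟨by linarith, by linarith⟩

end Aux17

open MeasureTheory Filter Topology Set UniformConvergence

namespace Aux17

variable {lam Astar : ℝ}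

/-- pairing -/
noncomputable def Pr (u : Circle1 → ℝ) (g : ℝ → ℝ) : ℝ := ∫ x in (0:ℝ)..1, u (x : Circle1) * g x

/-- periodic log-Lipschitz probability densities -/
structure Den (a : ℝ) (g : ℝ → ℝ) : Prop where
  cont : Continuous g
  per : Function.Periodic g 1
  nn : ∀ x, 0 ≤ g x
  ll : ∀ x y, g x ≤ Real.exp (a * |x - y|) * g y
  mass : ∫ x in (0:ℝ)..1, g x = 1

theorem coe_cont {u : Circle1 → ℝ} (hu : Continuous u) : Continuous fun x : ℝ => u (x : Circle1) :=
  hu.comp (AddCircle.continuous_mk' 1)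

theorem Den.le {a : ℝ} (ha : 0 ≤ a) {g : ℝ → ℝ} (hg : Den a g) (x : ℝ) : g x ≤ Real.exp a := by
  have h1 : ∫ y in x..(x+1), g y = 1 := by
    rw [hg.per.intervalIntegral_add_eq x 0, zero_add, hg.mass]
  have h2 : ∫ y in x..(x+1), Real.exp (-a) * g x ≤ ∫ y in x..(x+1), g y := by
    refine intervalIntegral.integral_mono_on (by linarith) (by simp) (hg.cont.intervalIntegrable _ _) ?_
    intro y hy
    have h := hg.ll x y
    have h3 : |x - y| ≤ 1 := by rw [abs_sub_comm, abs_of_nonneg (by linarith [hy.1])]; linarith [hy.2]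
    have h4 : g x ≤ Real.exp a * g y := h.trans
      (mul_le_mul_of_nonneg_right (Real.exp_le_exp.2 (by nlinarith)) (hg.nn y))
    calc Real.exp (-a) * g x ≤ Real.exp (-a) * (Real.exp a * g y) :=
          mul_le_mul_of_nonneg_left h4 (Real.exp_pos _).le
      _ = g y := by rw [← mul_assoc, ← Real.exp_add]; simp
  rw [h1] at h2
  simp at h2
  calc g x = Real.exp a * (Real.exp (-a) * g x) := by rw [← mul_assoc, ← Real.exp_add]; simp
    _ ≤ Real.exp a * 1 := mul_le_mul_of_nonneg_left h2 (Real.exp_pos _).le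
    _ = _ := mul_one _

theorem Den.ge {a : ℝ} (ha : 0 ≤ a) {g : ℝ → ℝ} (hg : Den a g) (x : ℝ) : Real.exp (-a) ≤ g x := by
  have h1 : ∫ y in x..(x+1), g y = 1 := by
    rw [hg.per.intervalIntegral_add_eq x 0, zero_add, hg.mass]
  have h2 : ∫ y in x..(x+1), g y ≤ ∫ y in x..(x+1), Real.exp a * g x := by
    refine intervalIntegral.integral_mono_on (by linarith) (hg.cont.intervalIntegrable _ _) (by simp) ?_
    intro y hy
    have h := hg.ll y x
    have h3 : |y - x| ≤ 1 := by rw [abs_of_nonneg (by linarith [hy.1])]; linarith [hy.2]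
    exact h.trans
      (mul_le_mul_of_nonneg_right (Real.exp_le_exp.2 (by nlinarith)) (hg.nn x))
  rw [h1] at h2
  simp at h2
  calc Real.exp (-a) = Real.exp (-a) * 1 := (mul_one _).symm
    _ ≤ Real.exp (-a) * (Real.exp a * g x) := mul_le_mul_of_nonneg_left h2 (Real.exp_pos _).le
    _ = _ := by rw [← mul_assoc, ← Real.exp_add]; simp

theorem Den.mono {a b : ℝ} (hab : a ≤ b) {g : ℝ → ℝ} (hg : Den a g) : Den b g :=
  ⟨hg.cont, hg.per, hg.nn, fun x y => (hg.ll x y).trans (mul_le_mul_of_nonneg_right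
    (Real.exp_le_exp.2 (mul_le_mul_of_nonneg_right hab (abs_nonneg _))) (hg.nn y)), hg.mass⟩

theorem den_one {a : ℝ} (ha : 0 ≤ a) : Den a (fun _ => 1) :=
  ⟨continuous_const, fun _ => rfl, fun _ => zero_le_one, fun x y => by
    rw [mul_one]; exact Real.one_le_exp (by positivity), by simp⟩

theorem Pr_abs_le {a : ℝ} {g : ℝ → ℝ} (hg : Den a g) {u : Circle1 → ℝ} (hu : Continuous u) {B : ℝ}
    (hB : ∀ x, |u x| ≤ B) : |Pr u g| ≤ B := by
  unfold Pr
  calc |∫ x in (0:ℝ)..1, u (x : Circle1) * g x| ≤ ∫ x in (0:ℝ)..1, |u (x : Circle1) * g x| :=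
        intervalIntegral.abs_integral_le_integral_abs zero_le_one
    _ ≤ ∫ x in (0:ℝ)..1, B * g x := by
        refine intervalIntegral.integral_mono_on zero_le_one
          (((coe_cont hu).mul hg.cont).abs.intervalIntegrable _ _)
          ((continuous_const.mul hg.cont).intervalIntegrable _ _) ?_
        intro x _
        rw [abs_mul, abs_of_nonneg (hg.nn x)]
        exact mul_le_mul_of_nonneg_right (hB _) (hg.nn x)
    _ = B := by rw [intervalIntegral.integral_const_mul, hg.mass, mul_one]

/-- weight -/
noncomputable def W (T : CM lam Astar) (g : ℝ → ℝ) (x : ℝ) : ℝ := g (S T x) * (deriv T.F (S T x))⁻¹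

/-- transfer operator on periodic functions -/
noncomputable def Lop (T : CM lam Astar) (g : ℝ → ℝ) (x : ℝ) : ℝ :=
  ∑ i ∈ Finset.range T.deg.toNat, W T g (x + i)

theorem W_cont (hlam : 1 < lam) (T : CM lam Astar) {g : ℝ → ℝ} (hg : Continuous g) :
    Continuous (W T g) :=
  (hg.comp (S_cont hlam T)).mul (((F'_cont T).comp (S_cont hlam T)).inv₀
    fun _ => (F'_pos hlam T _).ne')

theorem W_per (hlam : 1 < lam) (T : CM lam Astar) {g : ℝ → ℝ} (hg : Function.Periodic g 1) (x : ℝ) :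
    W T g (x + T.deg) = W T g x := by
  unfold W
  rw [S_add_deg hlam, hg, F'_per]

theorem deg_cast (hlam : 1 < lam) (T : CM lam Astar) : ((T.deg.toNat : ℕ) : ℝ) = T.deg := by
  have := Int.toNat_of_nonneg (deg_pos hlam T).le
  exact_mod_cast this

theorem Lop_dual (hlam : 1 < lam) (T : CM lam Astar) {g : ℝ → ℝ} (hg : Continuous g)
    (hp : Function.Periodic g 1) {u : Circle1 → ℝ} (hu : Continuous u) :
    Pr (u ∘ T.toMap) g = Pr u (Lop T g) := by
  set w : ℝ → ℝ := fun x => u (x : Circle1) * W T g x with hw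
  have wc : Continuous w := (coe_cont hu).mul (W_cont hlam T hg)
  have wp : Function.Periodic w T.deg := fun x => by
    simp only [hw]; rw [coe_add_int, W_per hlam T hp]
  have e1 : Pr (u ∘ T.toMap) g = ∫ x in (0:ℝ)..1, (w ∘ T.F) x * deriv T.F x := by
    unfold Pr
    refine intervalIntegral.integral_congr fun x _ => ?_
    simp only [hw, Function.comp, W, toMap_coe, S_F hlam]
    field_simp [(F'_pos hlam T x).ne']
  rw [e1, intervalIntegral.integral_comp_mul_deriv (fun x _ => (F_diff T x).hasDerivAt)
    (F'_cont T).continuousOn wc]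
  have e2 : T.F 1 = T.F 0 + T.deg := by have := T.lift_add_one 0; rwa [zero_add] at this
  rw [e2, wp.intervalIntegral_add_eq _ 0, zero_add, ← deg_cast hlam]
  have e3 := intervalIntegral.sum_integral_adjacent_intervals (μ := volume) (f := w)
    (a := fun k : ℕ => (k : ℝ)) (n := T.deg.toNat) (fun k _ => wc.intervalIntegrable _ _)
  simp only [Nat.cast_zero] at e3
  rw [← e3]
  unfold Pr Lop
  simp only [Finset.mul_sum]
  rw [intervalIntegral.integral_finsetSum]
  · refine Finset.sum_congr rfl fun i _ => ?_
    have := intervalIntegral.integral_comp_add_right (a := 0) (b := 1) w (i : ℝ)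
    rw [zero_add] at this
    push_cast
    rw [add_comm (i : ℝ) 1, ← this]
    refine intervalIntegral.integral_congr fun x _ => ?_
    simp only [hw]
    have := coe_add_int x (i : ℤ)
    push_cast at this
    rw [this]
  · intro i _
    exact ((coe_cont hu).mul ((W_cont hlam T hg).comp (continuous_id.add continuous_const))).intervalIntegrable _ _

theorem Lop_den (hlam : 1 < lam) (hA : 0 < Astar) (T : CM lam Astar) {a : ℝ} (ha : 0 ≤ a) {g : ℝ → ℝ}
    (hg : Den a g) : Den ((a + Astar / lam) / lam) (Lop T g) := by
  have l0 : 0 < lam := by linarith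
  refine ⟨?_, ?_, ?_, ?_, ?_⟩
  · exact continuous_finsetSum _ fun i _ =>
      (W_cont hlam T hg.cont).comp (continuous_id.add continuous_const)
  · intro x
    unfold Lop
    have h1 : ∀ i : ℕ, W T g (x + 1 + i) = W T g (x + (i + 1 : ℕ)) := fun i => by
      congr 1; push_cast; ring
    simp only [h1]
    have h2 := Finset.sum_range_succ (fun i : ℕ => W T g (x + i)) T.deg.toNat
    rw [Finset.sum_range_succ'] at h2
    rw [deg_cast hlam, W_per hlam T hg.per] at h2
    simpa using h2
  · intro x
    exact Finset.sum_nonneg fun i _ => mul_nonneg (hg.nn _) (inv_nonneg.2 (F'_pos hlam T _).le)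
  · intro x y
    unfold Lop
    rw [Finset.mul_sum]
    refine Finset.sum_le_sum fun i _ => ?_
    have key : ∀ x y, W T g x ≤ Real.exp ((a + Astar / lam) / lam * |x - y|) * W T g y := by
      intro x y
      unfold W
      have h1 := hg.ll (S T x) (S T y)
      have hs : |S T x - S T y| ≤ |x - y| / lam := by
        rw [le_div_iff₀ l0]; linarith [S_lip hlam T x y]
      set p := S T x
      set q := S T y
      have h2 : deriv T.F q ≤ Real.exp (Astar / lam * |p - q|) * deriv T.F p := by
        have h3 := F'_lip T q p
        have h4 := T.expanding p
        have h5 : Astar / lam * |p - q| + 1 ≤ Real.exp (Astar / lam * |p - q|) := Real.add_one_le_exp _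
        have h6 : Astar * |p - q| ≤ Astar / lam * |p - q| * deriv T.F p := by
          have : Astar * |p - q| = Astar / lam * |p - q| * lam := by field_simp
          rw [this]
          exact mul_le_mul_of_nonneg_left h4 (by positivity)
        have h7 := le_abs_self (deriv T.F q - deriv T.F p)
        rw [abs_sub_comm q p] at h3
        nlinarith [F'_pos hlam T p]
      have hpp := F'_pos hlam T p
      have hqp := F'_pos hlam T q
      have h8 : (deriv T.F p)⁻¹ ≤ Real.exp (Astar / lam * |p - q|) * (deriv T.F q)⁻¹ := by
        rw [← div_eq_mul_inv, le_div_iff₀ hqp, inv_mul_le_iff₀ hpp]; linarith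
      calc g p * (deriv T.F p)⁻¹ ≤ (Real.exp (a * |p - q|) * g q) *
            (Real.exp (Astar / lam * |p - q|) * (deriv T.F q)⁻¹) :=
            mul_le_mul h1 h8 (inv_nonneg.2 hpp.le) (mul_nonneg (Real.exp_pos _).le (hg.nn q))
        _ = Real.exp ((a + Astar / lam) * |p - q|) * (g q * (deriv T.F q)⁻¹) := by
            rw [add_mul, Real.exp_add]; ring
        _ ≤ _ := by
            refine mul_le_mul_of_nonneg_right (Real.exp_le_exp.2 ?_)
              (mul_nonneg (hg.nn q) (inv_nonneg.2 hqp.le))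
            rw [div_mul_eq_mul_div, mul_div_assoc]
            exact mul_le_mul_of_nonneg_left hs (by positivity)
    have := key (x + i) (y + i)
    rwa [add_sub_add_right_eq_sub] at this
  · have h := Lop_dual hlam T hg.cont hg.per (u := fun _ => 1) continuous_const
    unfold Pr at h
    simp only [Function.comp, one_mul] at h
    rw [← h, hg.mass]

/-- Doeblin-type splitting. -/
theorem split {a a' κ : ℝ} (ha' : 0 ≤ a') (haa : a' < a) (hκ : κ = Real.exp (-(2 * a)) * ((a - a') / a))
    {g : ℝ → ℝ} (hg : Den a' g) :
    ∃ g₁, Den a g₁ ∧ ∀ x, g x = κ + (1 - κ) * g₁ x := by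
  have ha : 0 < a := by linarith
  have hq : (a - a') / a ≤ 1 := by rw [div_le_one ha]; linarith
  have hq0 : 0 < (a - a') / a := div_pos (by linarith) ha
  have he : Real.exp (-(2*a)) < 1 := by rw [← Real.exp_zero]; exact Real.exp_lt_exp.2 (by linarith)
  have he0 := Real.exp_pos (-(2*a))
  have hκ0 : 0 < κ := by rw [hκ]; positivity
  have hκe : κ ≤ Real.exp (-(2*a)) := by rw [hκ]; nlinarith
  have hκ1 : 0 < 1 - κ := by linarith
  have hge : ∀ x, Real.exp (-a) ≤ g x := fun x => (hg.mono haa.le).ge ha.le x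
  have hκg : ∀ x, κ ≤ g x := fun x => hκe.trans ((Real.exp_le_exp.2 (by linarith)).trans (hge x))
  refine ⟨fun x => (g x - κ) / (1 - κ), ⟨?_, ?_, ?_, ?_, ?_⟩, ?_⟩
  · exact (hg.cont.sub continuous_const).div_const _
  · intro x; simp only [hg.per x]
  · intro x; exact div_nonneg (by linarith [hκg x]) hκ1.le
  · have near : ∀ x y, |x - y| ≤ 1 → g x - κ ≤ Real.exp (a * |x - y|) * (g y - κ) := by
      intro x y hr
      set r := |x - y| with hrd
      have r0 : 0 ≤ r := abs_nonneg _
      have h1 := hg.ll x y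
      have h2 : (a - a') * r ≤ Real.exp (a * r) - Real.exp (a' * r) := by
        have : Real.exp (a * r) = Real.exp (a' * r) * Real.exp ((a - a') * r) := by
          rw [← Real.exp_add]; congr 1; ring
        have h3 := Real.add_one_le_exp ((a - a') * r)
        have h4 : 1 ≤ Real.exp (a' * r) := Real.one_le_exp (by positivity)
        have h5 : 0 ≤ (a - a') * r := mul_nonneg (by linarith) r0
        rw [this]; nlinarith
      have h3 : Real.exp (a * r) - 1 ≤ a * r * Real.exp a := by
        have h4 := Real.add_one_le_exp (-(a * r))
        have h5 : Real.exp (a * r) * Real.exp (-(a * r)) = 1 := by rw [← Real.exp_add]; simp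
        have h6 : Real.exp (a * r) ≤ Real.exp a := Real.exp_le_exp.2 (by nlinarith)
        have h7 : 0 ≤ a * r := by positivity
        nlinarith [Real.exp_pos (a * r)]
      have h4 : κ * (Real.exp (a * r) - 1) ≤ (Real.exp (a * r) - Real.exp (a' * r)) * g y := by
        calc κ * (Real.exp (a * r) - 1) ≤ κ * (a * r * Real.exp a) :=
              mul_le_mul_of_nonneg_left h3 hκ0.le
          _ = ((a - a') * r) * Real.exp (-a) := by
              rw [hκ]
              have : Real.exp (-(2*a)) * Real.exp a = Real.exp (-a) := by
                rw [← Real.exp_add]; congr 1; ring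
              rw [← this]; field_simp
          _ ≤ _ := mul_le_mul h2 (hge y) (Real.exp_pos _).le
              ((mul_nonneg (by linarith) r0).trans h2)
      rw [← hrd] at h1
      linarith
    intro x y
    rw [← mul_div_assoc]
    refine div_le_div_of_nonneg_right ?_ hκ1.le
    by_cases hr : |x - y| ≤ 1
    · exact near x y hr
    · push Not at hr
      have hx : g x = g (x - ⌊x - y⌋) := by
        have := hg.per.sub_int_mul_eq (x := x) ⌊x - y⌋
        simpa using this.symm
      have hf : |x - ⌊x - y⌋ - y| ≤ 1 := by
        have h1 := Int.fract_nonneg (x - y)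
        have h2 := Int.fract_lt_one (x - y)
        unfold Int.fract at h1 h2
        rw [abs_le]; constructor <;> linarith
      rw [hx]
      refine (near _ y hf).trans (mul_le_mul_of_nonneg_right (Real.exp_le_exp.2 ?_) (by linarith [hκg y]))
      exact mul_le_mul_of_nonneg_left (hf.trans hr.le) ha.le
  · rw [intervalIntegral.integral_div, intervalIntegral.integral_sub (hg.cont.intervalIntegrable _ _)
      (by simp), hg.mass]
    simp [hκ1.ne']
  · intro x
    field_simp
    ring

end Aux17

open MeasureTheory Filter Topology Set UniformConvergence

namespace Aux17

variable {lam Astar : ℝ}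

/-- cone constant -/
noncomputable def cA (lam Astar : ℝ) : ℝ := Astar / (lam - 1)

/-- improved cone constant -/
noncomputable def cA' (lam Astar : ℝ) : ℝ := (cA lam Astar + Astar / lam) / lam

/-- contraction rate -/
noncomputable def th (lam Astar : ℝ) : ℝ :=
  1 - Real.exp (-(2 * cA lam Astar)) * ((cA lam Astar - cA' lam Astar) / cA lam Astar)

theorem cA_pos (hlam : 1 < lam) (hA : 0 < Astar) : 0 < cA lam Astar :=
  div_pos hA (by linarith)

theorem cA'_nonneg (hlam : 1 < lam) (hA : 0 < Astar) : 0 ≤ cA' lam Astar := by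
  have := cA_pos hlam hA
  have : 0 < lam := by linarith
  unfold cA'; positivity

theorem cA'_lt (hlam : 1 < lam) (hA : 0 < Astar) : cA' lam Astar < cA lam Astar := by
  have h0 : 0 < lam := by linarith
  have h1 : cA lam Astar * (lam - 1) = Astar := by
    unfold cA; field_simp [show lam - 1 ≠ 0 by linarith]
  have h2 : Astar / lam < Astar := by rw [div_lt_iff₀ h0]; nlinarith
  unfold cA'
  rw [div_lt_iff₀ h0]
  linarith

theorem th_pos (hlam : 1 < lam) (hA : 0 < Astar) : 0 < th lam Astar := by
  have h := cA_pos hlam hA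
  have h1 := cA'_lt hlam hA
  have h2 := cA'_nonneg hlam hA
  have hq : (cA lam Astar - cA' lam Astar) / cA lam Astar ≤ 1 := by rw [div_le_one h]; linarith
  have hq0 : 0 < (cA lam Astar - cA' lam Astar) / cA lam Astar := div_pos (by linarith) h
  have he : Real.exp (-(2 * cA lam Astar)) < 1 := by
    rw [← Real.exp_zero]; exact Real.exp_lt_exp.2 (by linarith)
  have he0 := Real.exp_pos (-(2 * cA lam Astar))
  unfold th
  nlinarith

theorem th_lt (hlam : 1 < lam) (hA : 0 < Astar) : th lam Astar < 1 := by
  have h := cA_pos hlam hA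
  have h1 := cA'_lt hlam hA
  have hq0 : 0 < (cA lam Astar - cA' lam Astar) / cA lam Astar := div_pos (by linarith) h
  have he0 := Real.exp_pos (-(2 * cA lam Astar))
  unfold th
  nlinarith [mul_pos he0 hq0]

/-- composition of a list of maps; the head acts first -/
noncomputable def cl : List (CM lam Astar) → Circle1 → Circle1
  | [] => id
  | T :: l => cl l ∘ T.toMap

theorem cl_cont (l : List (CM lam Astar)) : Continuous (cl l) := by
  induction l with
  | nil => exact continuous_id
  | cons T l ih => exact ih.comp (toMap_cont T)

theorem cl_append (l l' : List (CM lam Astar)) : cl (l ++ l') = cl l' ∘ cl l := by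
  induction l with
  | nil => rfl
  | cons T l ih => simp only [List.cons_append, cl, ih]; rfl

theorem Lop_den' (hlam : 1 < lam) (hA : 0 < Astar) (T : CM lam Astar) {g : ℝ → ℝ}
    (hg : Den (cA lam Astar) g) : Den (cA lam Astar) (Lop T g) :=
  (Lop_den hlam hA T (cA_pos hlam hA).le hg).mono (cA'_lt hlam hA).le

theorem push (hlam : 1 < lam) (hA : 0 < Astar) (l : List (CM lam Astar)) {g : ℝ → ℝ}
    (hg : Den (cA lam Astar) g) : ∃ g', Den (cA lam Astar) g' ∧ ∀ u : Circle1 → ℝ, Continuous u →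
      Pr (u ∘ cl l) g = Pr u g' := by
  induction l generalizing g with
  | nil => exact ⟨g, hg, fun u _ => rfl⟩
  | cons T l ih =>
    obtain ⟨g', h1, h2⟩ := ih (Lop_den' hlam hA T hg)
    refine ⟨g', h1, fun u hu => ?_⟩
    rw [← h2 u hu, ← Lop_dual hlam T hg.cont hg.per (hu.comp (cl_cont l))]
    rfl

theorem Pr_affine {u : Circle1 → ℝ} (hu : Continuous u) {g g₁ : ℝ → ℝ} (hg : Continuous g₁) {p q : ℝ}
    (h : ∀ x, g x = p + q * g₁ x) : Pr u g = p * Pr u (fun _ => 1) + q * Pr u g₁ := by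
  unfold Pr
  rw [← intervalIntegral.integral_const_mul, ← intervalIntegral.integral_const_mul,
    ← intervalIntegral.integral_add]
  · refine intervalIntegral.integral_congr fun x _ => ?_
    simp only [h]; ring
  · exact (continuous_const.mul ((coe_cont hu).mul continuous_const)).intervalIntegrable _ _
  · exact (continuous_const.mul ((coe_cont hu).mul hg)).intervalIntegrable _ _

theorem mem_loss (hlam : 1 < lam) (hA : 0 < Astar) (l : List (CM lam Astar)) {g h : ℝ → ℝ}
    (hg : Den (cA lam Astar) g) (hh : Den (cA lam Astar) h) {u : Circle1 → ℝ} (hu : Continuous u)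
    {B : ℝ} (hB : ∀ x, |u x| ≤ B) :
    |Pr (u ∘ cl l) g - Pr (u ∘ cl l) h| ≤ 2 * B * th lam Astar ^ l.length := by
  induction l generalizing g h with
  | nil =>
    have h1 := Pr_abs_le hg hu hB
    have h2 := Pr_abs_le hh hu hB
    have := abs_sub (Pr u g) (Pr u h)
    simp only [cl, Function.comp_id, List.length_nil, pow_zero]
    linarith
  | cons T l ih =>
    have e : ∀ {g : ℝ → ℝ}, Den (cA lam Astar) g →
        Pr (u ∘ cl (T :: l)) g = Pr (u ∘ cl l) (Lop T g) := fun hg => by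
      rw [← Lop_dual hlam T hg.cont hg.per (hu.comp (cl_cont l))]; rfl
    rw [e hg, e hh]
    obtain ⟨g₁, dg, eg⟩ := split (cA'_nonneg hlam hA) (cA'_lt hlam hA) rfl
      (Lop_den hlam hA T (cA_pos hlam hA).le hg)
    obtain ⟨h₁, dh, eh⟩ := split (cA'_nonneg hlam hA) (cA'_lt hlam hA) rfl
      (Lop_den hlam hA T (cA_pos hlam hA).le hh)
    rw [Pr_affine (hu.comp (cl_cont l)) dg.cont eg, Pr_affine (hu.comp (cl_cont l)) dh.cont eh,
      add_sub_add_left_eq_sub, ← mul_sub, abs_mul]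
    change |th lam Astar| * _ ≤ _
    rw [abs_of_pos (th_pos hlam hA), List.length_cons, pow_succ]
    calc _ ≤ th lam Astar * (2 * B * th lam Astar ^ l.length) :=
          mul_le_mul_of_nonneg_left (ih dg dh) (th_pos hlam hA).le
      _ = _ := by ring

/-- perturbation constant -/
noncomputable def cP (lam Astar : ℝ) : ℝ :=
  2 + Real.exp (cA lam Astar) * (1 + 2 * Astar) + 2 * cA lam Astar * Real.exp (3 * cA lam Astar)

theorem cP_pos (hlam : 1 < lam) (hA : 0 < Astar) : 0 < cP lam Astar := by
  have := cA_pos hlam hA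
  unfold cP; positivity

theorem exists_shift {x y δ : ℝ} (h : dist (x : Circle1) (y : Circle1) ≤ δ) :
    ∃ m : ℤ, |x - y - m| ≤ δ := by
  rw [dist_eq_norm, ← AddCircle.coe_sub, AddCircle.norm_eq] at h
  exact ⟨_, by simpa using h⟩

theorem pert_one (hlam : 1 < lam) (hA : 0 < Astar) {T₁ T₂ : CM lam Astar} {δ : ℝ}
    (hc : Close δ T₁ T₂) {g : ℝ → ℝ}
    (hg : Den (cA lam Astar) g) {v : Circle1 → ℝ} (hv : Continuous v)
    {B : ℝ} (hB : ∀ x, |v x| ≤ B) :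
    |Pr (v ∘ T₁.toMap) g - Pr (v ∘ T₂.toMap) g| ≤ cP lam Astar * B * δ := by
  have hδ := hc.nonneg
  have hB0 : 0 ≤ B := (abs_nonneg _).trans (hB 0)
  have ha := cA_pos hlam hA
  set a := cA lam Astar with ha_def
  have hk : 0 ≤ Real.exp a * (1 + 2 * Astar) + 2 * a * Real.exp (3 * a) := by positivity
  have hcP : cP lam Astar = 2 + (Real.exp a * (1 + 2 * Astar) + 2 * a * Real.exp (3 * a)) := by
    unfold cP; ring
  set K := Real.exp a * (1 + 2 * Astar) + 2 * a * Real.exp (3 * a) with hK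
  rw [hcP]
  by_cases h1 : 1 ≤ δ
  · have h2 := Pr_abs_le hg (hv.comp (toMap_cont T₁)) (B := B) (fun x => hB _)
    have h3 := Pr_abs_le hg (hv.comp (toMap_cont T₂)) (B := B) (fun x => hB _)
    have h4 := abs_sub (Pr (v ∘ T₁.toMap) g) (Pr (v ∘ T₂.toMap) g)
    have h5 : 0 ≤ K * B := mul_nonneg hk hB0
    nlinarith
  push Not at h1
  -- equal degrees and shift
  set D : ℝ → ℝ := fun x => T₁.F x - T₂.F x with hD
  have hDd : ∀ x, HasDerivAt D (deriv T₁.F x - deriv T₂.F x) x := fun x =>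
    (F_diff T₁ x).hasDerivAt.sub (F_diff T₂ x).hasDerivAt
  have hDl : ∀ x, |D x - D 0| ≤ δ * |x - 0| := fun x => by
    have := Convex.norm_image_sub_le_of_norm_hasDerivWithin_le (f := D) (C := δ) (s := univ)
      (f' := fun x => deriv T₁.F x - deriv T₂.F x)
      (fun x _ => (hDd x).hasDerivWithinAt) (fun x _ => (hc x).2) convex_univ (mem_univ 0) (mem_univ x)
    simpa [Real.norm_eq_abs] using this
  have e1 : T₁.F 1 = T₁.F 0 + T₁.deg := by have := T₁.lift_add_one 0; rwa [zero_add] at this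
  have e2 : T₂.F 1 = T₂.F 0 + T₂.deg := by have := T₂.lift_add_one 0; rwa [zero_add] at this
  have hdeg : T₁.deg = T₂.deg := by
    have h := hDl 1
    simp only [hD, e1, e2] at h
    have h' : |((T₁.deg - T₂.deg : ℤ) : ℝ)| < 1 := by
      push_cast
      refine lt_of_le_of_lt ?_ h1
      simpa [add_sub_add_comm] using h
    have : |T₁.deg - T₂.deg| < 1 := by exact_mod_cast h'
    have := Int.abs_lt_one_iff.1 this
    omega
  obtain ⟨m, hm⟩ := exists_shift (hc 0).1
  set φ : ℝ → ℝ := fun x => S T₂ (T₁.F x - m) with hφ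
  have hFφ : ∀ x, T₂.F (φ x) = T₁.F x - m := fun x => F_S hlam T₂ _
  have hφd : ∀ x, HasDerivAt φ ((deriv T₂.F (φ x))⁻¹ * deriv T₁.F x) x := fun x =>
    (S_deriv hlam T₂ _).comp x ((F_diff T₁ x).hasDerivAt.sub_const _)
  have hφc : Continuous φ := (S_cont hlam T₂).comp ((F_cont T₁).sub continuous_const)
  have hφ'c : Continuous fun x => (deriv T₂.F (φ x))⁻¹ * deriv T₁.F x :=
    (((F'_cont T₂).comp hφc).inv₀ fun x => (F'_pos hlam T₂ _).ne').mul (F'_cont T₁)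
  have hφ1 : φ 1 = φ 0 + 1 := by
    simp only [hφ]
    rw [← S_add_deg hlam, e1, hdeg]; congr 1; ring
  have hφn : ∀ x ∈ Icc (0:ℝ) 1, |φ x - x| ≤ 2 * δ := by
    intro x hx
    have h2 := F_expand' hlam T₂ (φ x) x
    rw [hFφ] at h2
    have h3 := hDl x
    rw [sub_zero, abs_of_nonneg hx.1] at h3
    have h4 : |T₁.F x - m - T₂.F x| ≤ 2 * δ := by
      have : T₁.F x - m - T₂.F x = (D x - D 0) + (T₁.F 0 - T₂.F 0 - m) := by simp only [hD]; ring
      rw [this]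
      refine (abs_add_le _ _).trans ?_
      nlinarith [hx.2]
    nlinarith [abs_nonneg (φ x - x)]
  set w : ℝ → ℝ := fun x => v (T₂.F x : Circle1) * g x with hw
  have wc : Continuous w := ((coe_cont hv).comp (F_cont T₂)).mul hg.cont
  have wp : Function.Periodic w 1 := fun x => by
    simp only [hw]; rw [T₂.lift_add_one, coe_add_int, hg.per]
  have E2 : Pr (v ∘ T₂.toMap) g =
      ∫ x in (0:ℝ)..1, v (T₁.F x : Circle1) * (g (φ x) * ((deriv T₂.F (φ x))⁻¹ * deriv T₁.F x)) := by
    have h2 : Pr (v ∘ T₂.toMap) g = ∫ x in (0:ℝ)..(0+1), w x := by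
      unfold Pr; rw [zero_add]
      refine intervalIntegral.integral_congr fun x _ => ?_
      simp only [hw, Function.comp, toMap_coe]
    rw [h2, wp.intervalIntegral_add_eq 0 (φ 0), ← hφ1,
      ← intervalIntegral.integral_comp_mul_deriv (fun x _ => hφd x) hφ'c.continuousOn wc]
    refine intervalIntegral.integral_congr fun x _ => ?_
    simp only [hw, Function.comp, hFφ]
    have := coe_add_int (T₁.F x - m) m
    rw [sub_add_cancel] at this
    rw [this]; ring
  have E1 : Pr (v ∘ T₁.toMap) g = ∫ x in (0:ℝ)..1, v (T₁.F x : Circle1) * g x := by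
    unfold Pr
    refine intervalIntegral.integral_congr fun x _ => ?_
    simp only [Function.comp, toMap_coe]
  rw [E1, E2, ← intervalIntegral.integral_sub]
  rotate_left
  · exact (((coe_cont hv).comp (F_cont T₁)).mul hg.cont).intervalIntegrable _ _
  · exact (((coe_cont hv).comp (F_cont T₁)).mul ((hg.cont.comp hφc).mul hφ'c)).intervalIntegrable _ _
  have fin := intervalIntegral.norm_integral_le_of_norm_le_const (a := 0) (b := 1) (C := B * (K * δ))
    (f := fun x => v (T₁.F x : Circle1) * g x -
      v (T₁.F x : Circle1) * (g (φ x) * ((deriv T₂.F (φ x))⁻¹ * deriv T₁.F x))) ?_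
  · rw [Real.norm_eq_abs, sub_zero, abs_one, mul_one] at fin
    have : 0 ≤ B * δ := mul_nonneg hB0 hδ
    linarith
  intro x hx
  rw [uIoc_of_le zero_le_one] at hx
  have hx' : x ∈ Icc (0:ℝ) 1 := ⟨hx.1.le, hx.2⟩
  rw [← mul_sub, norm_mul, Real.norm_eq_abs, Real.norm_eq_abs]
  refine mul_le_mul (hB _) ?_ (abs_nonneg _) hB0
  have hr := hφn x hx'
  set y := φ x
  have p2 := F'_pos hlam T₂ y
  have q1 : |(deriv T₂.F y)⁻¹ * deriv T₁.F x - 1| ≤ (1 + 2 * Astar) * δ := by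
    have h2 : (deriv T₂.F y)⁻¹ * deriv T₁.F x - 1 =
        (deriv T₂.F y)⁻¹ * (deriv T₁.F x - deriv T₂.F y) := by field_simp
    rw [h2, abs_mul, abs_of_pos (inv_pos.2 p2)]
    have h3 : (deriv T₂.F y)⁻¹ ≤ 1 := inv_le_one_of_one_le₀ (by linarith [T₂.expanding y])
    have h4 : |deriv T₁.F x - deriv T₂.F y| ≤ (1 + 2 * Astar) * δ := by
      have h5 := (hc x).2
      have h6 := F'_lip T₂ x y
      rw [abs_sub_comm x y] at h6
      have h7 := abs_sub_le (deriv T₁.F x) (deriv T₂.F x) (deriv T₂.F y)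
      nlinarith
    calc _ ≤ 1 * |deriv T₁.F x - deriv T₂.F y| := mul_le_mul_of_nonneg_right h3 (abs_nonneg _)
      _ ≤ _ := by rw [one_mul]; exact h4
  have q2 : |g y - g x| ≤ 2 * a * Real.exp (3 * a) * δ := by
    have key : ∀ x y, |x - y| ≤ 2 * δ → g x - g y ≤ 2 * a * Real.exp (3 * a) * δ := by
      intro x y hr
      have h2 := hg.ll x y
      have h3 := hg.le ha.le y
      have h4 := Real.add_one_le_exp (-(a * |x - y|))
      have h5 : Real.exp (a * |x - y|) * Real.exp (-(a * |x - y|)) = 1 := by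
        rw [← Real.exp_add]; simp
      have h6 : Real.exp (a * |x - y|) ≤ Real.exp (2 * a) := Real.exp_le_exp.2 (by nlinarith)
      have h7 : 0 ≤ a * |x - y| := by positivity
      have h8 : Real.exp (a * |x - y|) - 1 ≤ (a * |x - y|) * Real.exp (2 * a) := by
        nlinarith [Real.exp_pos (a * |x - y|)]
      have h9 : (a * |x - y|) * Real.exp (2 * a) ≤ (2 * a * δ) * Real.exp (2 * a) :=
        mul_le_mul_of_nonneg_right (by nlinarith) (Real.exp_pos _).le
      calc g x - g y ≤ (Real.exp (a * |x - y|) - 1) * g y := by linarith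
        _ ≤ ((2 * a * δ) * Real.exp (2 * a)) * Real.exp a :=
            mul_le_mul (h8.trans h9) h3 (hg.nn y) (by positivity)
        _ = _ := by
            rw [show 3 * a = 2 * a + a by ring, Real.exp_add]; ring
    rw [abs_le]
    have k1 := key y x hr
    have k2 := key x y (by rwa [abs_sub_comm])
    constructor <;> linarith
  have q3 := hg.le ha.le y
  have : g x - g y * ((deriv T₂.F y)⁻¹ * deriv T₁.F x) =
      -((g y - g x) + g y * ((deriv T₂.F y)⁻¹ * deriv T₁.F x - 1)) := by ring
  rw [this, abs_neg]
  refine (abs_add_le _ _).trans ?_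
  rw [abs_mul, abs_of_nonneg (hg.nn y)]
  have q4 := mul_le_mul q3 q1 (abs_nonneg _) (Real.exp_pos _).le
  rw [hK]
  linarith

theorem pert (hlam : 1 < lam) (hA : 0 < Astar) (T₀ : CM lam Astar) {δ : ℝ} (l : List (CM lam Astar))
    (hc : ∀ T ∈ l, Close δ T T₀) {g : ℝ → ℝ}
    (hg : Den (cA lam Astar) g) {u : Circle1 → ℝ} (hu : Continuous u)
    {B : ℝ} (hB : ∀ x, |u x| ≤ B) :
    |Pr (u ∘ cl l) g - Pr (u ∘ cl (List.replicate l.length T₀)) g| ≤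
      l.length * (cP lam Astar * B * δ) := by
  induction l generalizing g with
  | nil => simp
  | cons T l ih =>
    have h1 := pert_one hlam hA (hc T (by simp)) hg (hu.comp (cl_cont l)) (B := B) (fun x => hB _)
    have h2 := ih (fun T hT => hc T (by simp [hT])) (Lop_den' hlam hA T₀ hg)
    rw [← Lop_dual hlam T₀ hg.cont hg.per (hu.comp (cl_cont _)),
      ← Lop_dual hlam T₀ hg.cont hg.per (hu.comp (cl_cont _))] at h2
    have h3 := abs_sub_le (Pr ((u ∘ cl l) ∘ T.toMap) g) (Pr ((u ∘ cl l) ∘ T₀.toMap) g)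
      (Pr ((u ∘ cl (List.replicate l.length T₀)) ∘ T₀.toMap) g)
    simp only [List.length_cons, List.replicate_succ, cl]
    push_cast
    simp only [Function.comp_assoc] at h1 h2 h3
    linarith

end Aux17

open MeasureTheory Filter Topology Set UniformConvergence

namespace Aux17

variable {lam Astar : ℝ}

theorem vol_univ : (volume : Measure Circle1) univ = 1 := by
  rw [AddCircle.measure_univ]; simp

theorem integrable_cont {u : Circle1 → ℝ} (hu : Continuous u) : Integrable u (volume : Measure Circle1) :=
  hu.integrable_of_hasCompactSupport (HasCompactSupport.of_compactSpace u)

theorem exists_bd {u : Circle1 → ℝ} (hu : Continuous u) : ∃ B, 0 ≤ B ∧ ∀ x, |u x| ≤ B := by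
  obtain ⟨B, hB⟩ := (isCompact_range hu.abs).bddAbove
  exact ⟨B, (abs_nonneg (u 0)).trans (hB ⟨0, rfl⟩), fun x => hB ⟨x, rfl⟩⟩

theorem int_eq_Pr (u ψ : Circle1 → ℝ) : ∫ y : Circle1, u y * ψ y = Pr u (fun x : ℝ => ψ (x : Circle1)) := by
  have := AddCircle.intervalIntegral_preimage 1 0 (fun y : Circle1 => u y * ψ y)
  rw [zero_add] at this
  exact this.symm

theorem int_eq_Pr1 (u : Circle1 → ℝ) : ∫ y : Circle1, u y = Pr u (fun _ => 1) := by
  have := int_eq_Pr u (fun _ => 1)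
  simpa using this

/-- Lipschitz predicate -/
def Lp (h : Circle1 → ℝ) : Prop := ∃ K : ℝ, 0 ≤ K ∧ ∀ x y, |h x - h y| ≤ K * dist x y

theorem Lp.cont {h : Circle1 → ℝ} (hh : Lp h) : Continuous h := by
  obtain ⟨K, hK, h1⟩ := hh
  exact (LipschitzWith.of_dist_le_mul (K := ⟨K, hK⟩) fun x y => by
    rw [Real.dist_eq]; exact h1 x y).continuous

theorem Lp_of {h : Circle1 → ℝ} (hh : ∃ K : NNReal, LipschitzWith K h) : Lp h := by
  obtain ⟨K, hK⟩ := hh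
  exact ⟨K, K.2, fun x y => by rw [← Real.dist_eq]; exact hK.dist_le_mul x y⟩

theorem dist_coe_le (x y : ℝ) : dist (x : Circle1) (y : Circle1) ≤ |x - y| := by
  rw [dist_eq_norm, ← AddCircle.coe_sub]
  exact QuotientAddGroup.norm_mk_le_norm

theorem lip_ml (hlam : 1 < lam) (hA : 0 < Astar) {ψ : Circle1 → ℝ} (hψ : Lp ψ) :
    ∃ C : ℝ, 0 ≤ C ∧ ∀ (l : List (CM lam Astar)) (u : Circle1 → ℝ) (B : ℝ), Continuous u →
      (∀ x, |u x| ≤ B) →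
      |(∫ y : Circle1, (u ∘ cl l) y * ψ y) - (∫ y : Circle1, ψ y) * ∫ y : Circle1, (u ∘ cl l) y| ≤
        C * B * th lam Astar ^ l.length := by
  have hc := hψ.cont
  obtain ⟨M, hM0, hM⟩ := exists_bd hc
  obtain ⟨K, hK0, hK⟩ := hψ
  have ha := cA_pos hlam hA
  set a := cA lam Astar with ha_def
  set c := M + K / a + 1 with hcdef
  set I := ∫ y : Circle1, ψ y with hI
  have hI' : I = ∫ x in (0:ℝ)..1, ψ (x : Circle1) := by
    have := int_eq_Pr (fun _ => 1) ψ
    simpa [Pr] using this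
  have hlow : ∀ y, K / a + 1 ≤ ψ y + c := fun y => by
    have := neg_le_of_abs_le (hM y); rw [hcdef]; linarith
  have hKa : 0 ≤ K / a := by positivity
  have hIM : -M ≤ I := by
    rw [hI']
    have : ∫ x in (0:ℝ)..1, (-M) ≤ ∫ x in (0:ℝ)..1, ψ (x : Circle1) :=
      intervalIntegral.integral_mono_on zero_le_one (by simp) ((coe_cont hc).intervalIntegrable _ _)
        fun x _ => neg_le_of_abs_le (hM _)
    simpa using this
  set Z := I + c with hZ
  have hZ0 : 0 < Z := by rw [hZ, hcdef]; linarith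
  set g : ℝ → ℝ := fun x => (ψ (x : Circle1) + c) / Z with hg
  have hden : Den a g := by
    refine ⟨((coe_cont hc).add continuous_const).div_const _, ?_, ?_, ?_, ?_⟩
    · intro x
      have := coe_add_int x 1
      simp only [hg]
      rw [Int.cast_one] at this
      rw [this]
    · intro x; exact div_nonneg (by linarith [hlow (x : Circle1)]) hZ0.le
    · intro x y
      simp only [hg]
      rw [← mul_div_assoc]
      refine div_le_div_of_nonneg_right ?_ hZ0.le
      have h1 := (le_abs_self _).trans (hK (x : Circle1) (y : Circle1))
      have h2 := mul_le_mul_of_nonneg_left (dist_coe_le x y) hK0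
      have h3 := Real.add_one_le_exp (a * |x - y|)
      have h4 := hlow (y : Circle1)
      have h5 : K * |x - y| ≤ (a * |x - y|) * (ψ (y : Circle1) + c) := by
        have : K * |x - y| = (a * |x - y|) * (K / a) := by field_simp
        rw [this]
        exact mul_le_mul_of_nonneg_left (by linarith) (by positivity)
      have h6 : 0 ≤ ψ (y : Circle1) + c := by linarith
      nlinarith
    · simp only [hg]
      rw [intervalIntegral.integral_div, intervalIntegral.integral_add
        ((coe_cont hc).intervalIntegrable _ _) (by simp), ← hI']
      simp [← hZ, hZ0.ne']
  refine ⟨2 * Z, by positivity, fun l u B hu hB => ?_⟩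
  have h1 := mem_loss hlam hA l hden (den_one ha.le) hu hB
  rw [int_eq_Pr, int_eq_Pr1, Pr_affine (hu.comp (cl_cont l)) hden.cont
    (p := -c) (q := Z) (fun x => by simp only [hg]; field_simp; ring)]
  have : -c * Pr (u ∘ cl l) (fun _ => 1) + Z * Pr (u ∘ cl l) g - I * Pr (u ∘ cl l) (fun _ => 1) =
      Z * (Pr (u ∘ cl l) g - Pr (u ∘ cl l) (fun _ => 1)) := by rw [hZ]; ring
  rw [this, abs_mul, abs_of_pos hZ0]
  calc _ ≤ Z * (2 * B * th lam Astar ^ l.length) := mul_le_mul_of_nonneg_left h1 hZ0.le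
    _ = _ := by ring

theorem Lp.add {g h : Circle1 → ℝ} (hg : Lp g) (hh : Lp h) : Lp (fun x => g x + h x) := by
  obtain ⟨K, hK, h1⟩ := hg
  obtain ⟨L, hL, h2⟩ := hh
  refine ⟨K + L, by positivity, fun x y => ?_⟩
  have : g x + h x - (g y + h y) = (g x - g y) + (h x - h y) := by ring
  rw [this, add_mul]
  exact (abs_add_le _ _).trans (add_le_add (h1 x y) (h2 x y))

theorem Lp.mul {g h : Circle1 → ℝ} (hg : Lp g) (hh : Lp h) : Lp (fun x => g x * h x) := by
  obtain ⟨M, hM, m1⟩ := exists_bd hg.cont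
  obtain ⟨N, hN, m2⟩ := exists_bd hh.cont
  obtain ⟨K, hK, h1⟩ := hg
  obtain ⟨L, hL, h2⟩ := hh
  refine ⟨M * L + K * N, by positivity, fun x y => ?_⟩
  have : g x * h x - g y * h y = g x * (h x - h y) + (g x - g y) * h y := by ring
  rw [this, add_mul]
  refine (abs_add_le _ _).trans (add_le_add ?_ ?_)
  · rw [abs_mul, mul_assoc]; exact mul_le_mul (m1 x) (h2 x y) (abs_nonneg _) hM
  · rw [abs_mul]
    calc _ ≤ (K * dist x y) * N := mul_le_mul (h1 x y) (m2 y) (abs_nonneg _) (by positivity)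
      _ = _ := by ring

/-- subalgebra of Lipschitz functions -/
def lipAlg : Subalgebra ℝ C(Circle1, ℝ) where
  carrier := {h | Lp h}
  mul_mem' := fun {a b} ha hb => Lp.mul (show Lp a from ha) (show Lp b from hb)
  add_mem' := fun {a b} ha hb => Lp.add (show Lp a from ha) (show Lp b from hb)
  algebraMap_mem' := fun r => ⟨0, le_rfl, fun x y => by simp⟩

theorem lip_dense {h : Circle1 → ℝ} (hh : Continuous h) {ε : ℝ} (hε : 0 < ε) :
    ∃ ψ, Lp ψ ∧ ∀ x, |ψ x - h x| < ε := by
  have hs : lipAlg.SeparatesPoints := by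
    intro x y hxy
    refine ⟨_, ⟨(⟨fun z => dist z y, by fun_prop⟩ : C(Circle1, ℝ)), ?_, rfl⟩, ?_⟩
    · refine ⟨1, zero_le_one, fun p q => ?_⟩
      rw [one_mul]
      exact abs_dist_sub_le p q y
    · simpa using hxy
  obtain ⟨g, hg⟩ := ContinuousMap.exists_mem_subalgebra_near_continuous_of_separatesPoints
    lipAlg hs h hh ε hε
  exact ⟨g, g.2, hg⟩

theorem lip_dense_L1 {ρ : Circle1 → ℝ} (hρ : Integrable ρ volume) {ε : ℝ} (hε : 0 < ε) :
    ∃ ψ, Lp ψ ∧ ∫ x : Circle1, |ρ x - ψ x| ≤ ε := by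
  obtain ⟨h, _, h1, h2, h3⟩ := hρ.exists_hasCompactSupport_integral_sub_le (half_pos hε)
  obtain ⟨ψ, p1, p2⟩ := lip_dense h2 (half_pos hε)
  refine ⟨ψ, p1, ?_⟩
  have i1 : Integrable (fun x => |ρ x - h x|) (volume : Measure Circle1) := (hρ.sub h3).abs
  calc ∫ x : Circle1, |ρ x - ψ x| ≤ ∫ x : Circle1, (|ρ x - h x| + ε / 2) := by
        refine integral_mono (hρ.sub (integrable_cont p1.cont)).abs
          (i1.add (integrable_cont continuous_const)) fun x => ?_
        have := abs_sub_le (ρ x) (h x) (ψ x)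
        have h4 := p2 x
        rw [abs_sub_comm] at h4
        simp only
        linarith
    _ = (∫ x : Circle1, |ρ x - h x|) + ε / 2 := by
        rw [integral_add i1 (integrable_cont continuous_const)]
        simp [measureReal_def]
    _ ≤ ε := by
        have : ∫ x : Circle1, |ρ x - h x| ≤ ε / 2 := h1
        linarith

theorem integrable_mul {u ρ : Circle1 → ℝ} (hu : Continuous u) (hρ : Integrable ρ volume) :
    Integrable (fun x => u x * ρ x) (volume : Measure Circle1) := by
  obtain ⟨B, _, hB⟩ := exists_bd hu
  exact hρ.bdd_mul hu.aestronglyMeasurable (Eventually.of_forall hB)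

theorem int_mul_le {v σ : Circle1 → ℝ} (hv : Continuous v) (hσ : Integrable σ volume) {B : ℝ}
    (hB : ∀ x, |v x| ≤ B) : |∫ y : Circle1, v y * σ y| ≤ B * ∫ y : Circle1, |σ y| := by
  rw [← integral_const_mul]
  refine abs_integral_le_integral_abs.trans (integral_mono (integrable_mul hv hσ).abs
    (hσ.abs.const_mul _) fun x => ?_)
  simp only [abs_mul]
  exact mul_le_mul_of_nonneg_right (hB x) (abs_nonneg _)

theorem l1_ml (hlam : 1 < lam) (hA : 0 < Astar) {ρ : Circle1 → ℝ} (hρ : Integrable ρ volume)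
    {ε : ℝ} (hε : 0 < ε) :
    ∃ C : ℝ, 0 ≤ C ∧ ∀ (l : List (CM lam Astar)) (u : Circle1 → ℝ) (B : ℝ), Continuous u →
      (∀ x, |u x| ≤ B) →
      |(∫ y : Circle1, (u ∘ cl l) y * ρ y) - (∫ y : Circle1, ρ y) * ∫ y : Circle1, (u ∘ cl l) y| ≤
        ε * B + C * B * th lam Astar ^ l.length := by
  obtain ⟨ψ, p1, p2⟩ := lip_dense_L1 hρ (half_pos hε)
  obtain ⟨C, hC, h⟩ := lip_ml hlam hA p1
  refine ⟨C, hC, fun l u B hu hB => ?_⟩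
  have h0 := h l u B hu hB
  have iψ := integrable_cont p1.cont
  have hv := hu.comp (cl_cont l)
  have hB' : ∀ x, |(u ∘ cl l) x| ≤ B := fun x => hB _
  have hB0 : 0 ≤ B := (abs_nonneg _).trans (hB 0)
  set v := u ∘ cl l
  have h1 := int_mul_le hv (hρ.sub iψ) hB'
  have e1 : ∫ y : Circle1, v y * (ρ - ψ) y = (∫ y : Circle1, v y * ρ y) - ∫ y : Circle1, v y * ψ y := by
    rw [← integral_sub (integrable_mul hv hρ) (integrable_mul hv iψ)]
    refine integral_congr_ae (Eventually.of_forall fun x => ?_)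
    simp only [Pi.sub_apply]; ring
  have h2 : |(∫ y : Circle1, ρ y) - ∫ y : Circle1, ψ y| ≤ ε / 2 := by
    rw [← integral_sub hρ iψ]
    exact abs_integral_le_integral_abs.trans p2
  have h3 : |∫ y : Circle1, v y| ≤ B := by
    rw [int_eq_Pr1]
    exact Pr_abs_le (den_one (a := 0) le_rfl) hv hB'
  rw [e1] at h1
  have h4 : ∫ y : Circle1, |(ρ - ψ) y| ≤ ε / 2 := p2
  have h5 := h1.trans (mul_le_mul_of_nonneg_left h4 hB0)
  have h6 : |((∫ y : Circle1, ψ y) - (∫ y : Circle1, ρ y)) * ∫ y : Circle1, v y| ≤ ε / 2 * B := by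
    rw [abs_mul, abs_sub_comm]
    exact mul_le_mul h2 h3 (abs_nonneg _) (by linarith)
  have e2 : (∫ y : Circle1, v y * ρ y) - (∫ y : Circle1, ρ y) * ∫ y : Circle1, v y =
    ((∫ y : Circle1, v y * ρ y) - ∫ y : Circle1, v y * ψ y) +
    ((∫ y : Circle1, v y * ψ y) - (∫ y : Circle1, ψ y) * ∫ y : Circle1, v y) +
    ((∫ y : Circle1, ψ y) - (∫ y : Circle1, ρ y)) * ∫ y : Circle1, v y := by ring
  rw [e2]
  refine (abs_add_three _ _ _).trans ?_
  linarith

theorem srb_inv {T : CM lam Astar} {ρ : Circle1 → ℝ} (hρ : IsSRBDensity T ρ) {v : Circle1 → ℝ}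
    (hv : Continuous v) : ∫ y : Circle1, (v ∘ T.toMap) y * ρ y = ∫ y : Circle1, v y * ρ y := by
  obtain ⟨⟨h1, _, h3⟩, _, h4⟩ := hρ
  have e : ∀ w : Circle1 → ℝ, ∫ y, w y ∂(volume.withDensity fun x => ENNReal.ofReal (ρ x)) =
      ∫ y : Circle1, w y * ρ y := fun w => by
    rw [integral_withDensity_eq_integral_toReal_smul₀ h1.aemeasurable.ennreal_ofReal
      (Eventually.of_forall fun _ => ENNReal.ofReal_lt_top)]
    refine integral_congr_ae (Eventually.of_forall fun x => ?_)
    simp only [ENNReal.toReal_ofReal (h3 x), smul_eq_mul]; ring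
  rw [← e, ← e]
  conv_rhs => rw [← h4]
  rw [integral_map (toMap_cont T).measurable.aemeasurable hv.aestronglyMeasurable]
  rfl

theorem srb_inv_iter {T : CM lam Astar} {ρ : Circle1 → ℝ} (hρ : IsSRBDensity T ρ) {v : Circle1 → ℝ}
    (hv : Continuous v) (N : ℕ) :
    ∫ y : Circle1, (v ∘ cl (List.replicate N T)) y * ρ y = ∫ y : Circle1, v y * ρ y := by
  induction N with
  | zero => rfl
  | succ N ih =>
    rw [← ih, ← srb_inv hρ (hv.comp (cl_cont (List.replicate N T))), List.replicate_succ]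
    rfl

theorem srb_est (hlam : 1 < lam) (hA : 0 < Astar) {T : CM lam Astar} {ρ : Circle1 → ℝ}
    (hρ : IsSRBDensity T ρ) {f : Circle1 → ℝ} (hf : Continuous f) {B : ℝ} (hB : ∀ x, |f x| ≤ B) (N : ℕ) :
    |Pr (f ∘ cl (List.replicate N T)) (fun _ => 1) - ∫ y : Circle1, f y * ρ y| ≤
      2 * B * th lam Astar ^ N := by
  have hB0 : 0 ≤ B := (abs_nonneg _).trans (hB 0)
  have t0 := th_pos hlam hA
  have t1 := th_lt hlam hA
  have key : ∀ ε : ℝ, 0 < ε → |Pr (f ∘ cl (List.replicate N T)) (fun _ => 1) - ∫ y : Circle1, f y * ρ y| ≤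
      2 * B * th lam Astar ^ N + ε * B := by
    intro ε hε
    obtain ⟨C, hC, h⟩ := l1_ml hlam hA hρ.1.1 hε
    have lim : Tendsto (fun j : ℕ => 2 * B * th lam Astar ^ N + (ε * B + C * B * th lam Astar ^ (j + N)))
        atTop (𝓝 (2 * B * th lam Astar ^ N + (ε * B + C * B * 0))) :=
      tendsto_const_nhds.add (tendsto_const_nhds.add (((tendsto_pow_atTop_nhds_zero_of_lt_one t0.le t1).comp
        (tendsto_add_atTop_nat N)).const_mul _))
    rw [mul_zero, add_zero] at lim
    refine ge_of_tendsto' lim fun j => ?_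
    have h1 := h (List.replicate (j + N) T) f B hf hB
    rw [srb_inv_iter hρ hf, hρ.1.2.1, one_mul, int_eq_Pr1 (f ∘ cl _), List.length_replicate] at h1
    obtain ⟨g', d', e'⟩ := push hlam hA (List.replicate j T) (den_one (cA_pos hlam hA).le)
    have h2 := mem_loss hlam hA (List.replicate N T) (den_one (cA_pos hlam hA).le) d' hf hB
    rw [← e' _ (hf.comp (cl_cont _)), List.length_replicate, Function.comp_assoc, ← cl_append,
      List.replicate_append_replicate] at h2
    have := abs_sub_le (Pr (f ∘ cl (List.replicate N T)) fun _ => 1)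
      (Pr (f ∘ cl (List.replicate (j + N) T)) fun _ => 1) (∫ y : Circle1, f y * ρ y)
    rw [abs_sub_comm] at h1
    linarith
  refine le_of_forall_pos_le_add fun ε hε => ?_
  refine (key (ε / (B + 1)) (by positivity)).trans (add_le_add le_rfl ?_)
  rw [div_mul_eq_mul_div, div_le_iff₀ (by positivity)]
  nlinarith

theorem main_est (hlam : 1 < lam) (hA : 0 < Astar) {T : CM lam Astar} {ρ : Circle1 → ℝ}
    (hρ : IsSRBDensity T ρ) {f : Circle1 → ℝ} (hf : Continuous f) {B : ℝ} (hB : ∀ x, |f x| ≤ B)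
    (l₁ l₂ : List (CM lam Astar)) {δ : ℝ} (hc : ∀ T' ∈ l₂, Close δ T' T) :
    |Pr (f ∘ cl (l₁ ++ l₂)) (fun _ => 1) - ∫ y : Circle1, f y * ρ y| ≤
      4 * B * th lam Astar ^ l₂.length + l₂.length * (cP lam Astar * B * δ) := by
  have d1 : Den (cA lam Astar) (fun _ => 1) := den_one (cA_pos hlam hA).le
  obtain ⟨g', d', e'⟩ := push hlam hA l₁ d1
  have h1 := mem_loss hlam hA l₂ d' d1 hf hB
  rw [← e' _ (hf.comp (cl_cont _)), Function.comp_assoc, ← cl_append] at h1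
  have h2 := pert hlam hA T l₂ hc d1 hf hB
  have h3 := srb_est hlam hA hρ hf hB l₂.length
  have h4 := abs_sub_le (Pr (f ∘ cl (l₁ ++ l₂)) fun _ => 1) (Pr (f ∘ cl l₂) fun _ => 1)
    (∫ y : Circle1, f y * ρ y)
  have h5 := abs_sub_le (Pr (f ∘ cl l₂) fun _ => 1)
    (Pr (f ∘ cl (List.replicate l₂.length T)) fun _ => 1) (∫ y : Circle1, f y * ρ y)
  linarith

end Aux17

open MeasureTheory Filter Topology Set UniformConvergence

namespace Aux17

variable {lam Astar : ℝ}

/-- list of the maps in a row of the array -/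
def arrL (Tarr : ℕ → ℕ → CM lam Astar) (n k : ℕ) : List (CM lam Astar) :=
  (List.range k).map fun i => Tarr n (i + 1)

theorem arrIter_eq (Tarr : ℕ → ℕ → CM lam Astar) (n k : ℕ) : arrIter Tarr n k = cl (arrL Tarr n k) := by
  induction k with
  | zero => rfl
  | succ k ih =>
    unfold arrL at *
    rw [List.range_succ, List.map_append, cl_append, ← ih]
    rfl

theorem arrL_length (Tarr : ℕ → ℕ → CM lam Astar) (n k : ℕ) : (arrL Tarr n k).length = k := by
  simp [arrL]

theorem arrIter_cont (Tarr : ℕ → ℕ → CM lam Astar) (n k : ℕ) : Continuous (arrIter Tarr n k) := by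
  rw [arrIter_eq]; exact cl_cont _

theorem fnk_eq (Tarr : ℕ → ℕ → CM lam Astar) (f : Circle1 → ℝ) (n k : ℕ) :
    fnk Tarr f n k = f ∘ cl (arrL Tarr n k) := by
  rw [← arrIter_eq]; rfl

theorem fnk_cont (Tarr : ℕ → ℕ → CM lam Astar) {f : Circle1 → ℝ} (hf : Continuous f) (n k : ℕ) :
    Continuous (fnk Tarr f n k) := hf.comp (arrIter_cont Tarr n k)

theorem ptwise (hlam : 1 < lam) (hA : 0 < Astar) {η : ℝ} (hη : η ∈ Set.Ioo (0 : ℝ) 1)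
    (γ : ℝ → CM lam Astar) (hγ : HolderCurve η γ)
    (Tarr : ℕ → ℕ → CM lam Astar) (hT : ArrayApprox η γ Tarr)
    {f : Circle1 → ℝ} (hf : Continuous f) {B : ℝ} (hB : ∀ x, |f x| ≤ B)
    (ρhat : ℝ → Circle1 → ℝ) (hρhat : ∀ t ∈ Set.Icc (0 : ℝ) 1, IsSRBDensity (γ t) (ρhat t)) :
    ∃ C : ℝ, 0 ≤ C ∧ ∀ n : ℕ, 1 ≤ n → ∀ N : ℕ, 1 ≤ N → ∀ t ∈ Set.Icc (0 : ℝ) 1,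
      |(∫ y : Circle1, fnk Tarr f n ⌊(n : ℝ) * t⌋₊ y) - ∫ y : Circle1, f y * ρhat t y| ≤
        (4 * B * th lam Astar ^ N + C * ((N : ℝ) ^ 2 * (n : ℝ) ^ (-η))) +
          4 * B * th lam Astar ^ ⌊(n : ℝ) * t⌋₊ := by
  obtain ⟨H, hH⟩ := hγ
  obtain ⟨M, hM⟩ := hT
  have hB0 : 0 ≤ B := (abs_nonneg _).trans (hB 0)
  have c0 := cP_pos hlam hA
  have t0 := th_pos hlam hA
  have t1 := th_lt hlam hA
  refine ⟨cP lam Astar * B * (|M| + |H|), by positivity, fun n hn N hN t ht => ?_⟩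
  have hn0 : (0:ℝ) < n := by exact_mod_cast hn
  have hN1 : (1:ℝ) ≤ N := by exact_mod_cast hN
  set k := ⌊(n : ℝ) * t⌋₊ with hk
  have hk1 : (k:ℝ) ≤ n * t := Nat.floor_le (mul_nonneg hn0.le ht.1)
  have hk2 : (n:ℝ) * t < k + 1 := Nat.lt_floor_add_one _
  have hkn : (k:ℝ) ≤ n := hk1.trans (by nlinarith [ht.2])
  set N' := min N k with hN'
  have hN'k : N' ≤ k := min_le_right _ _
  have hN'N : N' ≤ N := min_le_left _ _
  set δ := (|M| + |H|) * ((N:ℝ) * (n:ℝ) ^ (-η)) with hδ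
  have hnη : 0 < (n:ℝ) ^ (-η) := Real.rpow_pos_of_pos hn0 _
  have hsplit : arrL Tarr n k = arrL Tarr n (k - N') ++
      (List.range N').map (fun i => Tarr n (k - N' + i + 1)) := by
    unfold arrL
    conv_lhs => rw [← Nat.sub_add_cancel hN'k, List.range_add, List.map_append, List.map_map]
    rfl
  have hc : ∀ T' ∈ (List.range N').map (fun i => Tarr n (k - N' + i + 1)), Close δ T' (γ t) := by
    intro T' hT'
    rw [List.mem_map] at hT'
    obtain ⟨i, hi, rfl⟩ := hT'
    rw [List.mem_range] at hi
    set m := k - N' + i + 1 with hm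
    have m1 : m ≤ k := by omega
    have m2 : k + 1 ≤ m + N := by omega
    have m1' : (m:ℝ) ≤ k := by exact_mod_cast m1
    have m2' : (k:ℝ) + 1 ≤ m + N := by exact_mod_cast m2
    have hs : (m:ℝ) / n ∈ Icc (0:ℝ) 1 := ⟨by positivity, by rw [div_le_one hn0]; linarith⟩
    have a1 := hM n hn _ hs
    rw [mul_div_cancel₀ _ hn0.ne', Nat.floor_natCast] at a1
    have a2 := hH _ hs t ht
    have a3 : |(m:ℝ) / n - t| ≤ N / n := by
      rw [abs_le]; constructor
      · rw [neg_le_sub_iff_le_add, ← add_div, le_div_iff₀ hn0]; linarith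
      · have h1 : (m:ℝ) / n ≤ t := by rw [div_le_iff₀ hn0]; linarith
        have h2 : (0:ℝ) ≤ N / n := by positivity
        linarith
    have a4 : |(m:ℝ) / n - t| ^ η ≤ N * (n:ℝ) ^ (-η) := by
      calc |(m:ℝ) / n - t| ^ η ≤ ((N:ℝ) / n) ^ η := Real.rpow_le_rpow (abs_nonneg _) a3 hη.1.le
        _ = (N:ℝ) ^ η * (n:ℝ) ^ (-η) := by
            rw [Real.div_rpow (by positivity) hn0.le, Real.rpow_neg hn0.le]; rfl
        _ ≤ N * (n:ℝ) ^ (-η) := by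
            refine mul_le_mul_of_nonneg_right ?_ hnη.le
            calc (N:ℝ) ^ η ≤ (N:ℝ) ^ (1:ℝ) := Real.rpow_le_rpow_of_exponent_le hN1 hη.2.le
              _ = N := Real.rpow_one _
    have b1 : dC1 (Tarr n m) (γ ((m:ℝ) / n)) ≤ |M| * (N * (n:ℝ) ^ (-η)) := by
      have h1 : dC1 (Tarr n m) (γ ((m:ℝ) / n)) ≤ |M| * (n:ℝ) ^ (-η) := by
        rw [Real.rpow_neg hn0.le, ← div_eq_mul_inv, le_div_iff₀ (Real.rpow_pos_of_pos hn0 _), mul_comm]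
        exact a1.trans (le_abs_self _)
      refine h1.trans (mul_le_mul_of_nonneg_left ?_ (abs_nonneg _))
      nlinarith
    have b2 : dC1 (γ ((m:ℝ) / n)) (γ t) ≤ |H| * (N * (n:ℝ) ^ (-η)) :=
      a2.trans (mul_le_mul (le_abs_self _) a4 (by positivity) (abs_nonneg _))
    refine ((close_dC1 hA _ _).trans (close_dC1 hA (γ ((m:ℝ)/n)) _)).mono ?_
    rw [hδ]; linarith
  have h1 := main_est hlam hA (hρhat t ht) hf hB (arrL Tarr n (k - N')) _ hc
  rw [← hsplit, ← fnk_eq, ← int_eq_Pr1, List.length_map, List.length_range] at h1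
  refine h1.trans ?_
  have h2 : th lam Astar ^ N' ≤ th lam Astar ^ N + th lam Astar ^ k := by
    rcases le_total N k with h | h
    · rw [hN', min_eq_left h]; linarith [pow_pos t0 k]
    · rw [hN', min_eq_right h]; linarith [pow_pos t0 N]
  have h3 : (N' : ℝ) * (cP lam Astar * B * δ) ≤ N * (cP lam Astar * B * δ) :=
    mul_le_mul_of_nonneg_right (by exact_mod_cast hN'N) (by positivity)
  have h4 : (N : ℝ) * (cP lam Astar * B * δ) =
      cP lam Astar * B * (|M| + |H|) * ((N : ℝ) ^ 2 * (n : ℝ) ^ (-η)) := by rw [hδ]; ring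
  have h5 := mul_le_mul_of_nonneg_left h2 (by positivity : 0 ≤ 4 * B)
  linarith

theorem M_cont (hlam : 1 < lam) (hA : 0 < Astar) {η : ℝ} (hη : η ∈ Set.Ioo (0 : ℝ) 1)
    (γ : ℝ → CM lam Astar) (hγ : HolderCurve η γ)
    {f : Circle1 → ℝ} (hf : Continuous f) {B : ℝ} (hB : ∀ x, |f x| ≤ B)
    (ρhat : ℝ → Circle1 → ℝ) (hρhat : ∀ t ∈ Set.Icc (0 : ℝ) 1, IsSRBDensity (γ t) (ρhat t)) :
    ContinuousOn (fun t => ∫ y : Circle1, f y * ρhat t y) (Icc 0 1) := by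
  obtain ⟨H, hH⟩ := hγ
  have hB0 : 0 ≤ B := (abs_nonneg _).trans (hB 0)
  have c0 := cP_pos hlam hA
  have t0 := th_pos hlam hA
  have t1 := th_lt hlam hA
  have key : ∀ N : ℕ, ∀ s ∈ Icc (0:ℝ) 1, ∀ t ∈ Icc (0:ℝ) 1,
      |(∫ y : Circle1, f y * ρhat s y) - ∫ y : Circle1, f y * ρhat t y| ≤
        6 * B * th lam Astar ^ N + N * (cP lam Astar * B * (H * |s - t| ^ η)) := by
    intro N s hs t ht
    have h1 := srb_est hlam hA (hρhat s hs) hf hB N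
    have h2 := main_est hlam hA (hρhat t ht) hf hB [] (List.replicate N (γ s))
      (δ := H * |s - t| ^ η) (fun T' hT' => by
        rw [List.eq_of_mem_replicate hT']
        exact (close_dC1 hA _ _).mono (hH s hs t ht))
    rw [List.nil_append, List.length_replicate] at h2
    have h3 := abs_sub_le (∫ y : Circle1, f y * ρhat s y)
      (Pr (f ∘ cl (List.replicate N (γ s))) fun _ => 1) (∫ y : Circle1, f y * ρhat t y)
    rw [abs_sub_comm] at h1
    linarith
  intro t ht
  rw [ContinuousWithinAt, Metric.tendsto_nhds]
  intro ε hε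
  have l1 : Tendsto (fun N : ℕ => 6 * B * th lam Astar ^ N) atTop (𝓝 (6 * B * 0)) :=
    (tendsto_pow_atTop_nhds_zero_of_lt_one t0.le t1).const_mul _
  rw [mul_zero] at l1
  obtain ⟨N, hN⟩ := (l1.eventually (gt_mem_nhds (half_pos hε))).exists
  have l2 : Tendsto (fun s : ℝ => N * (cP lam Astar * B * (H * |s - t| ^ η))) (𝓝[Icc 0 1] t) (𝓝 0) := by
    have hc : Continuous (fun s : ℝ => N * (cP lam Astar * B * (H * |s - t| ^ η))) := by
      have : Continuous fun s : ℝ => |s - t| ^ η :=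
        (continuous_id.sub continuous_const).abs.rpow_const fun _ => Or.inr hη.1.le
      fun_prop
    have := hc.tendsto t
    simp only [sub_self, abs_zero, Real.zero_rpow hη.1.ne', mul_zero] at this
    exact this.mono_left nhdsWithin_le_nhds
  filter_upwards [l2.eventually (gt_mem_nhds (half_pos hε)), self_mem_nhdsWithin] with s h1 hs
  rw [Real.dist_eq]
  have := key N s hs t ht
  linarith

theorem sumbound {θ e D r n x : ℝ} (h0 : 0 ≤ θ) (h1 : θ < 1) (hr1 : r ≤ 1) (hD : 0 ≤ D)
    (he : 0 ≤ e) {K : ℕ} (hK : K + r ≤ n) (d : ℕ → ℝ) (hd : ∀ k < K, |d k| ≤ e + D * θ ^ k)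
    (hx : |x| ≤ r * (e + D * θ ^ K)) :
    |(∑ k ∈ Finset.range K, d k) + x| ≤ n * e + D / (1 - θ) := by
  have s1 : |∑ k ∈ Finset.range K, d k| ≤ ∑ k ∈ Finset.range K, (e + D * θ ^ k) :=
    (Finset.abs_sum_le_sum_abs _ _).trans (Finset.sum_le_sum fun k hk => hd k (Finset.mem_range.1 hk))
  rw [Finset.sum_add_distrib, ← Finset.mul_sum] at s1
  simp only [Finset.sum_const, Finset.card_range, nsmul_eq_mul] at s1
  have s2 : (∑ k ∈ Finset.range (K + 1), θ ^ k) ≤ 1 / (1 - θ) := by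
    have : 0 < 1 - θ := by linarith
    rw [le_div_iff₀ this]
    have := mul_neg_geom_sum θ (K + 1)
    have h3 := pow_nonneg h0 (K + 1)
    linarith
  rw [Finset.sum_range_succ] at s2
  have s3 := mul_le_mul_of_nonneg_left s2 hD
  have s4 : r * (D * θ ^ K) ≤ 1 * (D * θ ^ K) :=
    mul_le_mul_of_nonneg_right hr1 (mul_nonneg hD (pow_nonneg h0 _))
  have s5 := mul_le_mul_of_nonneg_right hK he
  refine (abs_add_le _ _).trans ?_
  have : D / (1 - θ) = D * (1 / (1 - θ)) := by ring
  rw [this]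
  linarith

theorem fract_facts {n : ℕ} {t : ℝ} (ht : t ∈ Icc (0:ℝ) 1) :
    Int.fract ((n:ℝ) * t) = n * t - ⌊(n:ℝ) * t⌋₊ ∧ 0 ≤ Int.fract ((n:ℝ) * t) ∧
    Int.fract ((n:ℝ) * t) ≤ 1 ∧ (⌊(n:ℝ) * t⌋₊ : ℝ) + Int.fract ((n:ℝ) * t) ≤ n := by
  have h0 : 0 ≤ (n:ℝ) * t := mul_nonneg (Nat.cast_nonneg _) ht.1
  have e : Int.fract ((n:ℝ) * t) = n * t - ⌊(n:ℝ) * t⌋₊ := by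
    unfold Int.fract; rw [natCast_floor_eq_intCast_floor h0]
  refine ⟨e, Int.fract_nonneg _, (Int.fract_lt_one _).le, ?_⟩
  rw [e]
  nlinarith [ht.2, (Nat.cast_nonneg n : (0:ℝ) ≤ n)]

theorem seg {M : ℝ → ℝ} (hM : ContinuousOn M (Icc 0 1)) {a b c Q : ℝ} (ha : 0 ≤ a) (hab : a ≤ b)
    (hb : b ≤ 1) (h : ∀ s ∈ Ico a b, |c - M s| ≤ Q) :
    |(∫ s in a..b, M s) - (b - a) * c| ≤ (b - a) * Q := by
  have i1 : IntervalIntegrable M volume a b := (hM.mono (by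
    rw [uIcc_of_le hab]; exact Icc_subset_Icc ha hb)).intervalIntegrable
  have e : (∫ s in a..b, M s) - (b - a) * c = ∫ s in a..b, (M s - c) := by
    rw [intervalIntegral.integral_sub i1 (by simp)]; simp
  rw [e, ← Real.norm_eq_abs]
  have := intervalIntegral.norm_integral_le_of_norm_le_const_ae (a := a) (b := b) (C := Q)
    (f := fun s => M s - c) (by
      have : ∀ᵐ s : ℝ, s ≠ b := by simp [ae_iff]
      filter_upwards [this] with s hs hs'
      rw [uIoc_of_le hab] at hs'
      rw [Real.norm_eq_abs, abs_sub_comm]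
      exact h s ⟨hs'.1.le, lt_of_le_of_ne hs'.2 hs⟩)
  rw [abs_of_nonneg (by linarith)] at this
  linarith

theorem interp {M : ℝ → ℝ} (hM : ContinuousOn M (Icc 0 1)) {c : ℕ → ℝ} {n : ℕ} (hn : 1 ≤ n)
    {θ e D : ℝ} (h0 : 0 ≤ θ) (h1 : θ < 1) (hD : 0 ≤ D) (he : 0 ≤ e)
    (h : ∀ t ∈ Icc (0:ℝ) 1, |c ⌊(n:ℝ) * t⌋₊ - M t| ≤ e + D * θ ^ ⌊(n:ℝ) * t⌋₊)
    {t : ℝ} (ht : t ∈ Icc (0:ℝ) 1) :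
    |(∫ s in (0:ℝ)..t, M s) - (n:ℝ)⁻¹ * ((∑ k ∈ Finset.range ⌊(n:ℝ) * t⌋₊, c k) +
      Int.fract ((n:ℝ) * t) * c ⌊(n:ℝ) * t⌋₊)| ≤ e + D / (1 - θ) * (n:ℝ)⁻¹ := by
  obtain ⟨f1, f2, f3, f4⟩ := fract_facts (n := n) ht
  have hn0 : (0:ℝ) < n := by exact_mod_cast hn
  set K := ⌊(n:ℝ) * t⌋₊ with hK
  have hK1 : (K:ℝ) ≤ n * t := Nat.floor_le (mul_nonneg hn0.le ht.1)
  have hKt : (K:ℝ) / n ≤ t := by rw [div_le_iff₀ hn0]; linarith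
  have ii : ∀ a b : ℝ, 0 ≤ a → a ≤ b → b ≤ 1 → IntervalIntegrable M volume a b := fun a b ha hab hb =>
    (hM.mono (by rw [uIcc_of_le hab]; exact Icc_subset_Icc ha hb)).intervalIntegrable
  have hkK : ∀ k < K, ((k + 1 : ℕ) : ℝ) / n ≤ 1 := fun k hk => by
    have : ((k + 1 : ℕ) : ℝ) ≤ K := by exact_mod_cast hk
    exact le_trans (div_le_div_of_nonneg_right this hn0.le) (hKt.trans ht.2)
  have hkk : ∀ k : ℕ, (k:ℝ) / n ≤ ((k + 1 : ℕ) : ℝ) / n := fun k =>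
    div_le_div_of_nonneg_right (by push_cast; linarith) hn0.le
  have hsum := intervalIntegral.sum_integral_adjacent_intervals (μ := volume) (f := M)
    (a := fun k : ℕ => (k:ℝ) / n) (n := K) (fun k hk => ii _ _ (by positivity) (hkk k) (hkK k hk))
  simp only [Nat.cast_zero, zero_div] at hsum
  have hadd := intervalIntegral.integral_add_adjacent_intervals
    (ii 0 ((K:ℝ) / n) le_rfl (by positivity) (hKt.trans ht.2)) (ii ((K:ℝ) / n) t (by positivity) hKt ht.2)
  have hfl : ∀ k : ℕ, ∀ s : ℝ, (k:ℝ) / n ≤ s → s < ((k+1:ℕ):ℝ) / n → ⌊(n:ℝ) * s⌋₊ = k := by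
    intro k s hs1 hs2
    rw [div_le_iff₀ hn0] at hs1
    rw [lt_div_iff₀ hn0] at hs2
    push_cast at hs2
    rw [Nat.floor_eq_iff (by nlinarith [(Nat.cast_nonneg k : (0:ℝ) ≤ k)])]
    constructor <;> linarith
  have hd : ∀ k < K, |n * (∫ s in ((k:ℝ)/n)..(((k+1:ℕ):ℝ)/n), M s) - c k| ≤ e + D * θ ^ k := by
    intro k hk
    have := seg hM (a := (k:ℝ)/n) (b := ((k+1:ℕ):ℝ)/n) (c := c k) (Q := e + D * θ ^ k)
      (by positivity) (hkk k) (hkK k hk) (fun s hs => by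
        have h2 := h s ⟨le_trans (by positivity) hs.1, hs.2.le.trans (hkK k hk)⟩
        rwa [hfl k s hs.1 hs.2] at h2)
    have e1 : ((k+1:ℕ):ℝ)/n - (k:ℝ)/n = (n:ℝ)⁻¹ := by push_cast; field_simp; ring
    rw [e1] at this
    have e2 : n * (∫ s in ((k:ℝ)/n)..(((k+1:ℕ):ℝ)/n), M s) - c k =
      n * ((∫ s in ((k:ℝ)/n)..(((k+1:ℕ):ℝ)/n), M s) - (n:ℝ)⁻¹ * c k) := by field_simp
    rw [e2, abs_mul, abs_of_pos hn0]
    calc _ ≤ n * ((n:ℝ)⁻¹ * (e + D * θ ^ k)) := mul_le_mul_of_nonneg_left this hn0.le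
      _ = _ := by field_simp
  have hx : |n * (∫ s in ((K:ℝ)/n)..t, M s) - Int.fract ((n:ℝ) * t) * c K| ≤
      Int.fract ((n:ℝ) * t) * (e + D * θ ^ K) := by
    have := seg hM (a := (K:ℝ)/n) (b := t) (c := c K) (Q := e + D * θ ^ K)
      (by positivity) hKt ht.2 (fun s hs => by
        have h2 := h s ⟨le_trans (by positivity) hs.1, hs.2.le.trans ht.2⟩
        have h3 : s < ((K+1:ℕ):ℝ) / n := by
          refine lt_of_lt_of_le hs.2 ?_
          rw [le_div_iff₀ hn0]; push_cast
          linarith [Nat.lt_floor_add_one ((n:ℝ) * t)]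
        rwa [hfl K s hs.1 h3] at h2)
    have e1 : t - (K:ℝ)/n = (n:ℝ)⁻¹ * Int.fract ((n:ℝ) * t) := by rw [f1]; field_simp
    rw [e1] at this
    have e2 : n * (∫ s in ((K:ℝ)/n)..t, M s) - Int.fract ((n:ℝ) * t) * c K =
      n * ((∫ s in ((K:ℝ)/n)..t, M s) - (n:ℝ)⁻¹ * Int.fract ((n:ℝ) * t) * c K) := by field_simp
    rw [e2, abs_mul, abs_of_pos hn0]
    calc _ ≤ n * ((n:ℝ)⁻¹ * Int.fract ((n:ℝ) * t) * (e + D * θ ^ K)) :=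
          mul_le_mul_of_nonneg_left this hn0.le
      _ = _ := by field_simp
  have fin := sumbound h0 h1 f3 hD he f4 _ hd hx
  rw [Finset.sum_sub_distrib, ← Finset.mul_sum, hsum] at fin
  have e3 : (∫ s in (0:ℝ)..t, M s) - (n:ℝ)⁻¹ * ((∑ k ∈ Finset.range K, c k) +
      Int.fract ((n:ℝ) * t) * c K) = (n:ℝ)⁻¹ * (n * (∫ s in (0:ℝ)..((K:ℝ)/n), M s) -
        ∑ k ∈ Finset.range K, c k + (n * (∫ s in ((K:ℝ)/n)..t, M s) - Int.fract ((n:ℝ) * t) * c K)) := by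
    rw [← hadd]; field_simp; ring
  rw [e3, abs_mul, abs_of_pos (inv_pos.2 hn0)]
  calc _ ≤ (n:ℝ)⁻¹ * (n * e + D / (1 - θ)) := mul_le_mul_of_nonneg_left fin (inv_pos.2 hn0).le
    _ = _ := by field_simp

theorem zmean (Tarr : ℕ → ℕ → CM lam Astar) {f : Circle1 → ℝ} (hf : Continuous f) {ρ : Circle1 → ℝ}
    (hρ : Integrable ρ volume) (n : ℕ) (t : ℝ) :
    ∫ y : Circle1, zetaP Tarr f n y t * ρ y =
      (n:ℝ)⁻¹ * ((∑ k ∈ Finset.range ⌊(n:ℝ) * t⌋₊, ∫ y : Circle1, fnk Tarr f n k y * ρ y) +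
      Int.fract ((n:ℝ) * t) * ∫ y : Circle1, fnk Tarr f n ⌊(n:ℝ) * t⌋₊ y * ρ y) := by
  have hi : ∀ k, Integrable (fun y => fnk Tarr f n k y * ρ y) (volume : Measure Circle1) := fun k =>
    integrable_mul (fnk_cont Tarr hf n k) hρ
  rw [← integral_finsetSum _ (fun k _ => hi k), ← integral_const_mul,
    ← integral_add (integrable_finsetSum _ fun k _ => hi k) ((hi _).const_mul _), ← integral_const_mul]
  refine integral_congr_ae (Eventually.of_forall fun y => ?_)
  simp only [zetaP, ← Finset.sum_mul]
  ring

theorem zmeanM (Tarr : ℕ → ℕ → CM lam Astar) {f : Circle1 → ℝ} (hf : Continuous f) (n : ℕ) (t : ℝ) :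
    zetaMeanM Tarr f n t =
      (n:ℝ)⁻¹ * ((∑ k ∈ Finset.range ⌊(n:ℝ) * t⌋₊, ∫ y : Circle1, fnk Tarr f n k y) +
      Int.fract ((n:ℝ) * t) * ∫ y : Circle1, fnk Tarr f n ⌊(n:ℝ) * t⌋₊ y) := by
  have := zmean Tarr hf (ρ := fun _ => 1) (integrable_cont continuous_const) n t
  simpa [zetaMeanM] using this

theorem mean_diff (hlam : 1 < lam) (hA : 0 < Astar) (Tarr : ℕ → ℕ → CM lam Astar) {f : Circle1 → ℝ}
    (hf : Continuous f) {ρ : Circle1 → ℝ} (hρ : Integrable ρ volume) (hρ1 : ∫ y : Circle1, ρ y = 1)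
    {e D : ℝ} (he : 0 ≤ e) (hD : 0 ≤ D)
    (h : ∀ l : List (CM lam Astar), |(∫ y : Circle1, (f ∘ cl l) y * ρ y) -
      (∫ y : Circle1, ρ y) * ∫ y : Circle1, (f ∘ cl l) y| ≤ e + D * th lam Astar ^ l.length)
    {n : ℕ} (hn : 1 ≤ n) {t : ℝ} (ht : t ∈ Icc (0:ℝ) 1) :
    |(∫ y : Circle1, zetaP Tarr f n y t * ρ y) - zetaMeanM Tarr f n t| ≤
      e + D / (1 - th lam Astar) * (n:ℝ)⁻¹ := by
  have hn0 : (0:ℝ) < n := by exact_mod_cast hn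
  obtain ⟨f1, f2, f3, f4⟩ := fract_facts (n := n) ht
  have hd : ∀ k, |(∫ y : Circle1, fnk Tarr f n k y * ρ y) - ∫ y : Circle1, fnk Tarr f n k y| ≤
      e + D * th lam Astar ^ k := fun k => by
    have := h (arrL Tarr n k)
    rwa [hρ1, one_mul, arrL_length, ← fnk_eq] at this
  rw [zmean Tarr hf hρ, zmeanM Tarr hf]
  set K := ⌊(n:ℝ) * t⌋₊
  have fin := sumbound (th_pos hlam hA).le (th_lt hlam hA) f3 hD he f4 _ (fun k (_ : k < K) => hd k)
    (x := Int.fract ((n:ℝ) * t) * ((∫ y : Circle1, fnk Tarr f n K y * ρ y) -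
      ∫ y : Circle1, fnk Tarr f n K y))
    (by rw [abs_mul, abs_of_nonneg f2]; exact mul_le_mul_of_nonneg_left (hd K) f2)
  rw [Finset.sum_sub_distrib] at fin
  rw [← mul_sub, abs_mul, abs_of_pos (inv_pos.2 hn0)]
  calc _ ≤ (n:ℝ)⁻¹ * (n * e + D / (1 - th lam Astar)) := by
        refine mul_le_mul_of_nonneg_left (le_trans (le_of_eq ?_) fin) (inv_pos.2 hn0).le
        congr 1; ring
    _ = _ := by field_simp

end Aux17

open MeasureTheory Filter Topology Set UniformConvergence

namespace Aux17

variable {lam Astar : ℝ}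

theorem det (hlam : 1 < lam) (hA : 0 < Astar) {η : ℝ} (hη : η ∈ Set.Ioo (0 : ℝ) 1)
    (γ : ℝ → CM lam Astar) (hγ : HolderCurve η γ)
    (Tarr : ℕ → ℕ → CM lam Astar) (hT : ArrayApprox η γ Tarr)
    {f : Circle1 → ℝ} (hf : Continuous f) {B : ℝ} (hB : ∀ x, |f x| ≤ B)
    (ρhat : ℝ → Circle1 → ℝ) (hρhat : ∀ t ∈ Set.Icc (0 : ℝ) 1, IsSRBDensity (γ t) (ρhat t)) :
    ∃ C : ℝ, 0 ≤ C ∧ ∀ n : ℕ, 1 ≤ n → ∀ N : ℕ, 1 ≤ N → ∀ t ∈ Set.Icc (0 : ℝ) 1,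
      |(∫ s in (0:ℝ)..t, ∫ y : Circle1, f y * ρhat s y) - zetaMeanM Tarr f n t| ≤
        (4 * B * th lam Astar ^ N + C * ((N : ℝ) ^ 2 * (n : ℝ) ^ (-η))) +
          4 * B / (1 - th lam Astar) * (n:ℝ)⁻¹ := by
  have hB0 : 0 ≤ B := (abs_nonneg _).trans (hB 0)
  have t0 := th_pos hlam hA
  have t1 := th_lt hlam hA
  obtain ⟨C, hC, h⟩ := ptwise hlam hA hη γ hγ Tarr hT hf hB ρhat hρhat
  refine ⟨C, hC, fun n hn N hN t ht => ?_⟩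
  rw [zmeanM Tarr hf]
  exact interp (M_cont hlam hA hη γ hγ hf hB ρhat hρhat)
    (c := fun k => ∫ y : Circle1, fnk Tarr f n k y) hn t0.le t1 (by positivity) (by positivity)
    (fun t ht => h n hn N hN t ht) ht

theorem rate_lim {θ η p a C d : ℝ} (h0 : 0 < θ) (h1 : θ < 1) (hp : 0 ≤ p) (hpη : p < η) (hη : η < 1) :
    ∃ N : ℕ → ℕ, (∀ n, 1 ≤ n → 1 ≤ N n) ∧ Tendsto (fun n : ℕ => (n:ℝ) ^ p *
      ((a * θ ^ (N n) + C * ((N n : ℝ) ^ 2 * (n:ℝ) ^ (-η))) + d * (n:ℝ)⁻¹)) atTop (𝓝 0) := by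
  set ε := (η - p) / 4 with hε
  have e0 : 0 < ε := by rw [hε]; linarith
  have hb : 0 < - Real.log θ := by have := Real.log_neg h0 h1; linarith
  have hN1 : ∀ n : ℕ, 1 ≤ n → (1:ℝ) ≤ (n:ℝ) ^ ε := fun n hn =>
    Real.one_le_rpow (by exact_mod_cast hn) e0.le
  refine ⟨fun n => ⌈(n:ℝ) ^ ε⌉₊, fun n hn => Nat.one_le_iff_ne_zero.2 (Nat.ceil_pos.2 (by linarith [hN1 n hn])).ne', ?_⟩
  have hat : Tendsto (fun n : ℕ => (n:ℝ) ^ ε) atTop atTop :=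
    (tendsto_rpow_atTop e0).comp tendsto_natCast_atTop_atTop
  have L1 : Tendsto (fun n : ℕ => (n:ℝ) ^ p * θ ^ ⌈(n:ℝ) ^ ε⌉₊) atTop (𝓝 0) := by
    refine squeeze_zero' (Eventually.of_forall fun n => by positivity) ?_
      ((tendsto_rpow_mul_exp_neg_mul_atTop_nhds_zero (p / ε) _ hb).comp hat)
    filter_upwards [eventually_ge_atTop 1] with n hn
    have hn0 : (0:ℝ) ≤ n := by positivity
    have : (n:ℝ) ^ p = ((n:ℝ) ^ ε) ^ (p / ε) := by
      rw [← Real.rpow_mul hn0]; congr 1; field_simp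
    simp only [Function.comp]
    rw [← this]
    refine mul_le_mul_of_nonneg_left ?_ (by positivity)
    rw [← Real.rpow_natCast, neg_neg, ← Real.rpow_def_of_pos h0]
    exact Real.rpow_le_rpow_of_exponent_ge h0 h1.le (Nat.le_ceil _)
  have L2 : Tendsto (fun n : ℕ => (n:ℝ) ^ p * ((⌈(n:ℝ) ^ ε⌉₊ : ℝ) ^ 2 * (n:ℝ) ^ (-η))) atTop (𝓝 0) := by
    have := ((tendsto_rpow_neg_atTop (y := 2 * ε) (by positivity)).comp
      tendsto_natCast_atTop_atTop).const_mul (4:ℝ)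
    rw [mul_zero] at this
    refine squeeze_zero' (Eventually.of_forall fun n => by positivity) ?_ this
    filter_upwards [eventually_ge_atTop 1] with n hn
    have hn0 : (0:ℝ) < n := by exact_mod_cast hn
    have h2 : (⌈(n:ℝ) ^ ε⌉₊ : ℝ) ≤ 2 * (n:ℝ) ^ ε := by
      have := Nat.ceil_lt_add_one (show 0 ≤ (n:ℝ) ^ ε by positivity)
      linarith [hN1 n hn]
    have h3 : (⌈(n:ℝ) ^ ε⌉₊ : ℝ) ^ 2 ≤ (2 * (n:ℝ) ^ ε) ^ 2 := by gcongr
    have h4 : (n:ℝ) ^ p * ((2 * (n:ℝ) ^ ε) ^ 2 * (n:ℝ) ^ (-η)) = 4 * (n:ℝ) ^ (-(2 * ε)) := by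
      have : -(2 * ε) = p + (ε + ε) + -η := by rw [hε]; ring
      rw [this, Real.rpow_add hn0, Real.rpow_add hn0, Real.rpow_add hn0]; ring
    simp only [Function.comp]
    rw [← h4]
    gcongr
  have L3 : Tendsto (fun n : ℕ => (n:ℝ) ^ p * (n:ℝ)⁻¹) atTop (𝓝 0) := by
    refine ((tendsto_rpow_neg_atTop (y := 1 - p) (by linarith)).comp
      tendsto_natCast_atTop_atTop).congr' ?_
    filter_upwards [eventually_ge_atTop 1] with n hn
    have hn0 : (0:ℝ) < n := by exact_mod_cast hn
    simp only [Function.comp]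
    rw [show -(1 - p) = p + -1 by ring, Real.rpow_add hn0, Real.rpow_neg_one]
  have := ((L1.const_mul a).add (L2.const_mul C)).add (L3.const_mul d)
  simp only [mul_zero, add_zero] at this
  exact this.congr fun n => by ring

theorem rate (hlam : 1 < lam) (hA : 0 < Astar) {η : ℝ} (hη : η ∈ Set.Ioo (0 : ℝ) 1)
    (γ : ℝ → CM lam Astar) (hγ : HolderCurve η γ)
    (Tarr : ℕ → ℕ → CM lam Astar) (hT : ArrayApprox η γ Tarr)
    {f : Circle1 → ℝ} (hf : Continuous f)
    (ρhat : ℝ → Circle1 → ℝ) (hρhat : ∀ t ∈ Set.Icc (0 : ℝ) 1, IsSRBDensity (γ t) (ρhat t))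
    {p : ℝ} (hp : 0 ≤ p) (hpη : p < η) :
    ∃ r : ℕ → ℝ, Tendsto (fun n : ℕ => (n:ℝ) ^ p * r n) atTop (𝓝 0) ∧
      ∀ n : ℕ, 1 ≤ n → ∀ t ∈ Set.Icc (0 : ℝ) 1,
      |(∫ s in (0:ℝ)..t, ∫ y : Circle1, f y * ρhat s y) - zetaMeanM Tarr f n t| ≤ r n := by
  obtain ⟨B, hB0, hB⟩ := exists_bd hf
  obtain ⟨C, hC, h⟩ := det hlam hA hη γ hγ Tarr hT hf hB ρhat hρhat
  obtain ⟨N, hN, hl⟩ := rate_lim (a := 4 * B) (C := C) (d := 4 * B / (1 - th lam Astar))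
    (th_pos hlam hA) (th_lt hlam hA) hp hpη hη.2
  exact ⟨_, hl, fun n hn t ht => h n hn (N n) (hN n hn) t ht⟩

theorem part1 (hlam : 1 < lam) (hA : 0 < Astar) (Tarr : ℕ → ℕ → CM lam Astar)
    {f : Circle1 → ℝ} (hf : Continuous f) (ψ : Circle1 → ℝ) (hψ : IsProbDensity ψ)
    (hL : ∃ K : NNReal, LipschitzWith K ψ) :
      (∃ C : ℝ, 0 < C ∧ ∀ n : ℕ, 1 ≤ n →
        (⨆ t : Set.Icc (0 : ℝ) 1,
          |Real.sqrt n * zetaMean Tarr f ψ n t - Real.sqrt n * zetaMeanM Tarr f n t|) ≤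
          C / Real.sqrt n) ∧
      Tendsto (fun n : ℕ => ⨆ t : Set.Icc (0 : ℝ) 1,
          |Real.sqrt n * zetaMean Tarr f ψ n t - Real.sqrt n * zetaMeanM Tarr f n t|)
        atTop (𝓝 0) := by
  obtain ⟨B, hB0, hB⟩ := exists_bd hf
  obtain ⟨C, hC, h⟩ := lip_ml hlam hA (Lp_of hL)
  have t1 : 0 < 1 - th lam Astar := by linarith [th_lt hlam hA]
  have key : ∃ C : ℝ, 0 < C ∧ ∀ n : ℕ, 1 ≤ n →
        (⨆ t : Set.Icc (0 : ℝ) 1,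
          |Real.sqrt n * zetaMean Tarr f ψ n t - Real.sqrt n * zetaMeanM Tarr f n t|) ≤
          C / Real.sqrt n := by
    refine ⟨C * B / (1 - th lam Astar) + 1, by positivity, fun n hn => ?_⟩
    have hn0 : (0:ℝ) < n := by exact_mod_cast hn
    have hs : 0 < Real.sqrt n := Real.sqrt_pos.2 hn0
    refine Real.iSup_le (fun t => ?_) (by positivity)
    have := mean_diff hlam hA Tarr hf hψ.1 hψ.2.1 le_rfl (mul_nonneg hC hB0)
      (fun l => by rw [zero_add]; exact h l f B hf hB) hn t.2
    rw [← mul_sub, abs_mul, abs_of_pos hs]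
    calc _ ≤ Real.sqrt n * (0 + C * B / (1 - th lam Astar) * (n:ℝ)⁻¹) :=
          mul_le_mul_of_nonneg_left this hs.le
      _ = C * B / (1 - th lam Astar) / Real.sqrt n := by
          have : (n:ℝ)⁻¹ = (Real.sqrt n)⁻¹ * (Real.sqrt n)⁻¹ := by
            rw [← mul_inv, Real.mul_self_sqrt hn0.le]
          rw [this, zero_add]; field_simp
      _ ≤ _ := by gcongr; linarith
  refine ⟨key, ?_⟩
  obtain ⟨D, hD, hk⟩ := key
  refine squeeze_zero' (Eventually.of_forall fun n => Real.iSup_nonneg fun t => abs_nonneg _) ?_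
    (tendsto_const_nhds.div_atTop (a := D)
      (Real.tendsto_sqrt_atTop.comp tendsto_natCast_atTop_atTop))
  filter_upwards [eventually_ge_atTop 1] with n hn using hk n hn

theorem part2 (hlam : 1 < lam) (hA : 0 < Astar) {η : ℝ} (hη : η ∈ Set.Ioo (0 : ℝ) 1)
    (γ : ℝ → CM lam Astar) (hγ : HolderCurve η γ)
    (Tarr : ℕ → ℕ → CM lam Astar) (hT : ArrayApprox η γ Tarr)
    {f : Circle1 → ℝ} (hf : Continuous f)
    (ρhat : ℝ → Circle1 → ℝ) (hρhat : ∀ t ∈ Set.Icc (0 : ℝ) 1, IsSRBDensity (γ t) (ρhat t))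
    (h2 : 1 / 2 < η) :
      Tendsto (fun n : ℕ => ⨆ t : Set.Icc (0 : ℝ) 1,
          |Real.sqrt n * (∫ s in (0:ℝ)..(t:ℝ), ∫ y : Circle1, f y * ρhat s y) -
            Real.sqrt n * zetaMeanM Tarr f n t|)
        atTop (𝓝 0) := by
  obtain ⟨r, hr, h⟩ := rate hlam hA hη γ hγ Tarr hT hf ρhat hρhat (p := 1 / 2) (by norm_num) h2
  refine squeeze_zero' (Eventually.of_forall fun n => Real.iSup_nonneg fun t => abs_nonneg _) ?_ hr
  filter_upwards [eventually_ge_atTop 1] with n hn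
  rw [← Real.sqrt_eq_rpow]
  refine ciSup_le fun t => ?_
  rw [← mul_sub, abs_mul, abs_of_nonneg (Real.sqrt_nonneg _)]
  exact mul_le_mul_of_nonneg_left (h n hn t t.2) (Real.sqrt_nonneg _)

theorem part3 (hlam : 1 < lam) (hA : 0 < Astar) {η : ℝ} (hη : η ∈ Set.Ioo (0 : ℝ) 1)
    (γ : ℝ → CM lam Astar) (hγ : HolderCurve η γ)
    (Tarr : ℕ → ℕ → CM lam Astar) (hT : ArrayApprox η γ Tarr)
    {f : Circle1 → ℝ} (hf : Continuous f)
    (ρhat : ℝ → Circle1 → ℝ) (hρhat : ∀ t ∈ Set.Icc (0 : ℝ) 1, IsSRBDensity (γ t) (ρhat t))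
    (ν : Measure Circle1) (hν : IsProbabilityMeasure ν) (hac : ν ≪ volume) :
      Tendsto (fun n : ℕ => ⨆ t : Set.Icc (0 : ℝ) 1,
          |(∫ y : Circle1, zetaP Tarr f n y t ∂ν) -
            ∫ s in (0:ℝ)..(t:ℝ), ∫ y : Circle1, f y * ρhat s y|)
        atTop (𝓝 0) := by
  obtain ⟨B, hB0, hB⟩ := exists_bd hf
  have t1 : 0 < 1 - th lam Astar := by linarith [th_lt hlam hA]
  obtain ⟨r, hr, hrb⟩ := rate hlam hA hη γ hγ Tarr hT hf ρhat hρhat (p := 0) le_rfl hη.1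
  simp only [Real.rpow_zero, one_mul] at hr
  set ρ : Circle1 → ℝ := fun x => (ν.rnDeriv volume x).toReal with hρd
  have hρ : Integrable ρ volume := Measure.integrable_toReal_rnDeriv
  have hch : ∀ u : Circle1 → ℝ, ∫ y, u y ∂ν = ∫ y : Circle1, u y * ρ y := fun u => by
    rw [← integral_rnDeriv_smul hac]
    exact integral_congr_ae (Eventually.of_forall fun x => by simp [hρd, mul_comm])
  have hρ1 : ∫ y : Circle1, ρ y = 1 := by
    have := hch fun _ => 1
    simpa using this.symm
  rw [Metric.tendsto_atTop']
  intro δ hδ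
  have hε : 0 < δ / 4 / (B + 1) := by positivity
  obtain ⟨C, hC, h⟩ := l1_ml hlam hA hρ hε
  have hlim : Tendsto (fun n : ℕ => C * B / (1 - th lam Astar) * (n:ℝ)⁻¹ + r n) atTop (𝓝 0) := by
    have := ((tendsto_inv_atTop_nhds_zero_nat (𝕜 := ℝ)).const_mul (C * B / (1 - th lam Astar))).add hr
    simpa using this
  have hev := hlim.eventually (gt_mem_nhds (half_pos hδ))
  obtain ⟨n0, hn0⟩ := eventually_atTop.1 hev
  refine ⟨n0 + 1, fun n hn => ?_⟩
  have hlt := hn0 n (by omega)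
  have hn1 : 1 ≤ n := by omega
  rw [Real.dist_eq, sub_zero, abs_of_nonneg (Real.iSup_nonneg fun t => abs_nonneg _)]
  have hεB : δ / 4 / (B + 1) * B ≤ δ / 4 := by
    rw [div_mul_eq_mul_div, div_le_iff₀ (by linarith)]
    nlinarith
  refine lt_of_le_of_lt (ciSup_le fun t => ?_) (show 3 * δ / 4 < δ by linarith)
  have a1 := mean_diff hlam hA Tarr hf hρ hρ1 (by positivity) (mul_nonneg hC hB0)
      (fun l => h l f B hf hB) hn1 t.2
  have a2 := hrb n hn1 t t.2
  rw [hch]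
  rw [abs_sub_comm] at a2
  have a3 := abs_sub_le (∫ y : Circle1, zetaP Tarr f n y t * ρ y) (zetaMeanM Tarr f n t)
    (∫ s in (0:ℝ)..(t:ℝ), ∫ y : Circle1, f y * ρhat s y)
  linarith

end Aux17

/-- Lemma `lem:admissible`.  With `ζ(t) = ∫₀ᵗ μ̂ₛ(f) ds`:
(i) if `ν` has a Lipschitz density `ψ`, then
`sup_t |√n ν(ζₙ(·,t)) − √n 𝔪(ζₙ(·,t))| → 0`, and indeed it is `O(n^{−1/2})`;
(ii) if `η > 1/2`, then `sup_t |√n ζ(t) − √n 𝔪(ζₙ(·,t))| → 0`;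
(iii) if `ν` is an arbitrary absolutely continuous probability measure, then
`sup_t |ν(ζₙ(·,t)) − ζ(t)| → 0`. -/
theorem statement17 {lam Astar : ℝ} (hlam : 1 < lam) (hA : 0 < Astar)
    {η : ℝ} (hη : η ∈ Set.Ioo (0 : ℝ) 1)
    (γ : ℝ → CM lam Astar) (hγ : HolderCurve η γ)
    (Tarr : ℕ → ℕ → CM lam Astar) (hT : ArrayApprox η γ Tarr)
    (f : Circle1 → ℝ) (hf : ∃ K : NNReal, LipschitzWith K f)
    (ρhat : ℝ → Circle1 → ℝ) (hρhat : ∀ t ∈ Set.Icc (0 : ℝ) 1, IsSRBDensity (γ t) (ρhat t)) :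
    (∀ ψ : Circle1 → ℝ, IsProbDensity ψ → (∃ K : NNReal, LipschitzWith K ψ) →
      (∃ C : ℝ, 0 < C ∧ ∀ n : ℕ, 1 ≤ n →
        (⨆ t : Set.Icc (0 : ℝ) 1,
          |Real.sqrt n * zetaMean Tarr f ψ n t - Real.sqrt n * zetaMeanM Tarr f n t|) ≤
          C / Real.sqrt n) ∧
      Tendsto (fun n : ℕ => ⨆ t : Set.Icc (0 : ℝ) 1,
          |Real.sqrt n * zetaMean Tarr f ψ n t - Real.sqrt n * zetaMeanM Tarr f n t|)
        atTop (𝓝 0)) ∧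
    (1/2 < η →
      Tendsto (fun n : ℕ => ⨆ t : Set.Icc (0 : ℝ) 1,
          |Real.sqrt n * (∫ s in (0:ℝ)..(t:ℝ), ∫ y : Circle1, f y * ρhat s y) -
            Real.sqrt n * zetaMeanM Tarr f n t|)
        atTop (𝓝 0)) ∧
    (∀ ν : Measure Circle1, IsProbabilityMeasure ν → ν ≪ volume →
      Tendsto (fun n : ℕ => ⨆ t : Set.Icc (0 : ℝ) 1,
          |(∫ y : Circle1, zetaP Tarr f n y t ∂ν) -
            ∫ s in (0:ℝ)..(t:ℝ), ∫ y : Circle1, f y * ρhat s y|)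
        atTop (𝓝 0)) := by

  have hc : Continuous f := (Aux17.Lp_of hf).cont
  exact ⟨fun ψ h1 h2 => Aux17.part1 hlam hA Tarr hc ψ h1 h2,
    fun h => Aux17.part2 hlam hA hη γ hγ Tarr hT hc ρhat hρhat h,
    fun ν h1 h2 => Aux17.part3 hlam hA hη γ hγ Tarr hT hc ρhat hρhat ν h1 h2⟩
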